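/- arXiv:2504.09579 — 14 statements merged into one kernel-verified Lean document; each statement's English description precedes it below -/
import Mathlib

section
/- Let n > 1 be a nice positive integer and let p be the smallest prime divisor of n. Then n/p has fewer than p distinct prime factors, i.e., ω(n/p) < p. -/
/-- A congruence is a pair `(a, d)` representing `a (mod d)`, with residue `a : ℤ`
and modulus `d : ℕ`. Two congruences overlap if some integer satisfies both. -/
def Overlap (c₁ c₂ : ℤ × ℕ) : Prop :=
  ∃ x : ℤ, x ≡ c₁.1 [ZMOD (c₁.2 : ℤ)] ∧ x ≡ c₂.1 [ZMOD (c₂.2 : ℤ)]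

/-- A set of congruences is good if any two distinct overlapping congruences in it
have coprime moduli. -/
def IsGood (A : Set (ℤ × ℕ)) : Prop :=
  ∀ c₁ ∈ A, ∀ c₂ ∈ A, c₁ ≠ c₂ → Overlap c₁ c₂ → Nat.Coprime c₁.2 c₂.2

/-- A positive integer `n` is nice if there is a choice of residues `a d` for each
divisor `d > 1` of `n` such that `{a_d (mod d) : d ∣ n, d > 1}` is good. -/
def IsNice (n : ℕ) : Prop :=
  ∃ a : ℕ → ℤ, IsGood {c : ℤ × ℕ | ∃ d : ℕ, d ∣ n ∧ 1 < d ∧ c = (a d, d)}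

theorem overlap_of_modEq_gcd (a b : ℤ) (d e : ℕ) (h : a ≡ b [ZMOD (Nat.gcd d e : ℤ)]) :
    Overlap (a, d) (b, e) := by
  obtain ⟨t, ht⟩ := h.symm.dvd
  have hb := Nat.gcd_eq_gcd_ab d e
  refine ⟨a - d * (Nat.gcdA d e * t), ?_, ?_⟩
  · exact Int.modEq_iff_dvd.2 ⟨Nat.gcdA d e * t, by ring⟩
  · refine Int.modEq_iff_dvd.2 ⟨-(Nat.gcdB d e * t), ?_⟩
    rw [hb] at ht
    linear_combination -ht

theorem nice_necessary (n : ℕ) (hn : 1 < n) (h : IsNice n) :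
    (n / n.minFac).primeFactors.card < n.minFac := by
  obtain ⟨a, ha⟩ := h
  have hp : n.minFac.Prime := Nat.minFac_prime (by omega)
  have hpn : n.minFac ∣ n := Nat.minFac_dvd n
  set p := n.minFac with hpdef
  have h1 : 1 ∉ (n / p).primeFactors := fun h => Nat.not_prime_one (Nat.prime_of_mem_primeFactors h)
  have hdiv : ∀ q ∈ insert 1 (n / p).primeFactors, p * q ∣ n ∧ 1 < p * q := by
    intro q hq
    have hq' : q ∣ n / p ∧ 0 < q := by
      rcases Finset.mem_insert.1 hq with rfl | hq
      · simp
      · exact ⟨Nat.dvd_of_mem_primeFactors hq, (Nat.prime_of_mem_primeFactors hq).pos⟩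
    refine ⟨?_, ?_⟩
    · have := Nat.mul_dvd_mul_left p hq'.1
      rwa [Nat.mul_div_cancel' hpn] at this
    · have := hp.two_le
      nlinarith [hq'.2]
  have hcop : ∀ q ∈ insert 1 (n / p).primeFactors, ∀ r ∈ insert 1 (n / p).primeFactors,
      q ≠ r → Nat.Coprime q r := by
    intro q hq r hr hne
    rcases Finset.mem_insert.1 hq with rfl | hq
    · simp
    rcases Finset.mem_insert.1 hr with rfl | hr
    · simp
    exact (Nat.coprime_primes (Nat.prime_of_mem_primeFactors hq)
      (Nat.prime_of_mem_primeFactors hr)).2 hne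
  have hinj : Set.InjOn (fun q : ℕ => ((a (p * q) : ℤ) : ZMod p))
      (insert 1 (n / p).primeFactors : Finset ℕ) := by
    intro q hq r hr heq
    by_contra hne
    have hq := Finset.mem_coe.1 hq
    have hr := Finset.mem_coe.1 hr
    have hg : Nat.gcd (p * q) (p * r) = p := by
      rw [Nat.gcd_mul_left, hcop q hq r hr hne, mul_one]
    have hm : a (p * q) ≡ a (p * r) [ZMOD (p : ℤ)] := (ZMod.intCast_eq_intCast_iff _ _ _).1 heq
    have hc := ha (a (p * q), p * q) ⟨p * q, (hdiv q hq).1, (hdiv q hq).2, rfl⟩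
      (a (p * r), p * r) ⟨p * r, (hdiv r hr).1, (hdiv r hr).2, rfl⟩
      (fun h => hne (Nat.eq_of_mul_eq_mul_left hp.pos (Prod.mk.inj h).2))
      (overlap_of_modEq_gcd _ _ _ _ (by rw [hg]; exact hm))
    have hc' : Nat.gcd (p * q) (p * r) = 1 := hc
    rw [hg] at hc'
    exact hp.one_lt.ne' hc'
  haveI : NeZero p := ⟨hp.ne_zero⟩
  have hcard := Finset.card_le_card_of_injOn (t := (Finset.univ : Finset (ZMod p))) _
    (fun _ _ => Finset.mem_coe.2 (Finset.mem_univ _)) hinj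
  rw [Finset.card_insert_of_notMem h1, Finset.card_univ, ZMod.card] at hcard
  omega
end

section
/- Let n > 1 be a positive integer and let p be the smallest prime divisor of n. If n/p has fewer than p distinct prime factors (i.e., ω(n/p) < p), then n is nice. -/
lemma key_lt (q e e' c c' r : ℕ) (hq : q.Prime) (he : 1 ≤ e) (hc : 1 ≤ c) (hcr : c ≤ r)
    (hr : r < q) (hlt : e < e') (h : q ^ (e - 1) * c ≡ q ^ (e' - 1) * c' [MOD q ^ e]) : False := by
  have h1 : q ^ e ∣ q ^ (e' - 1) * c' := Dvd.dvd.mul_right (pow_dvd_pow q (by omega)) _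
  have h2 : q ^ e ∣ q ^ (e - 1) * c := (h.dvd_iff dvd_rfl).2 h1
  obtain ⟨k, rfl⟩ : ∃ k, e = k + 1 := ⟨e - 1, by omega⟩
  rw [pow_succ, Nat.add_sub_cancel] at h2
  have h3 := Nat.dvd_of_mul_dvd_mul_left (pow_pos hq.pos k) h2
  have := Nat.le_of_dvd (by omega) h3
  omega

lemma key_eq (q e c c' : ℕ) (hq : q.Prime) (he : 1 ≤ e) (hc : 1 ≤ c) (hc' : 1 ≤ c')
    (hcr : c ≤ q) (hcr' : c' ≤ q)
    (h : q ^ (e - 1) * c ≡ q ^ (e - 1) * c' [MOD q ^ e]) : c = c' := by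
  obtain ⟨k, rfl⟩ : ∃ k, e = k + 1 := ⟨e - 1, by omega⟩
  rw [pow_succ, Nat.add_sub_cancel] at h
  have h3 : c ≡ c' [MOD q] := Nat.ModEq.mul_left_cancel' (pow_pos hq.pos k).ne' h
  rw [Nat.modEq_iff_dvd] at h3
  obtain ⟨t, ht⟩ := h3
  have hq0 := hq.pos
  have : t < 1 := by nlinarith
  have : -1 < t := by nlinarith
  have : t = 0 := by omega
  subst this
  omega

lemma cycle_sub (S T : Finset ℕ) (f g : Equiv.Perm ℕ) (hf : f.IsCycleOn S) (hg : g.IsCycleOn T)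
    (hfg : ∀ q ∈ S, q ∈ T → f q = g q) (x : ℕ) (hx : x ∈ S) (hx' : x ∈ T) : S ⊆ T := by
  intro y hy
  obtain ⟨m, -, rfl⟩ := hf.exists_pow_eq hx hy
  have : ∀ m : ℕ, (f ^ m) x ∈ S ∧ (f ^ m) x ∈ T := by
    intro m
    induction m with
    | zero => simpa using ⟨hx, hx'⟩
    | succ k ih =>
      rw [pow_succ', Equiv.Perm.mul_apply]
      refine ⟨hf.1.mapsTo ih.1, ?_⟩
      rw [hfg _ ih.1 ih.2]
      exact hg.1.mapsTo ih.2
  exact (this m).2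

lemma exists_idx (S : Finset ℕ) : ∃ idx : ℕ → ℕ, Set.InjOn idx S ∧
    ∀ q ∈ S, 1 ≤ idx q ∧ idx q ≤ S.card := by
  refine ⟨fun q => if h : q ∈ S then (S.equivFin ⟨q, h⟩ : ℕ) + 1 else 0, ?_, ?_⟩
  · intro a ha b hb hab
    have ha' : a ∈ S := ha
    have hb' : b ∈ S := hb
    simp only [ha', hb', dif_pos] at hab
    have := S.equivFin.injective (Fin.ext (Nat.succ.inj hab))
    simpa using this
  · intro q hq
    simp only [hq, dif_pos]
    have := (S.equivFin ⟨q, hq⟩).2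
    omega

lemma card_bounds (n : ℕ) (hn : 1 < n)
    (h : (n / n.minFac).primeFactors.card < n.minFac) (q : ℕ) (hq : q ∈ n.primeFactors) :
    n.primeFactors.card ≤ q ∧ (q ^ 2 ∣ n → n.primeFactors.card < q) := by
  have hp : n.minFac.Prime := Nat.minFac_prime (by omega)
  have hqp := Nat.prime_of_mem_primeFactors hq
  have hqn := Nat.dvd_of_mem_primeFactors hq
  have hle : n.minFac ≤ q := Nat.minFac_le_of_dvd hqp.two_le hqn
  have hmul : n.minFac * (n / n.minFac) = n := Nat.mul_div_cancel' (Nat.minFac_dvd n)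
  have hne : n / n.minFac ≠ 0 := by
    intro h0
    rw [h0] at hmul
    omega
  have hpf : n.primeFactors = insert n.minFac (n / n.minFac).primeFactors := by
    conv_lhs => rw [← hmul]
    rw [Nat.primeFactors_mul hp.ne_zero hne, hp.primeFactors]
    rfl
  have hc : n.primeFactors.card ≤ n.minFac := by
    rw [hpf]
    exact (Finset.card_insert_le _ _).trans h
  refine ⟨hc.trans hle, fun h2 => ?_⟩
  rcases hle.lt_or_eq with hl | hl
  · omega
  · rw [← hl, hpf, Finset.insert_eq_of_mem]
    · exact h
    · rw [← hl] at h2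
      refine Nat.mem_primeFactors.2 ⟨hp, ?_, hne⟩
      rw [sq] at h2
      exact (Nat.dvd_div_iff_mul_dvd (Nat.minFac_dvd n)).2 h2

theorem nice_sufficient (n : ℕ) (hn : 1 < n)
    (h : (n / n.minFac).primeFactors.card < n.minFac) : IsNice n := by
  classical
  obtain ⟨idx, hinj, hidx⟩ := exists_idx n.primeFactors
  have hb := card_bounds n hn h
  have hcyc : ∀ S : Finset ℕ, ∃ f : Equiv.Perm ℕ, f.IsCycleOn S := fun S =>
    let ⟨f, hf, _⟩ := (S : Set ℕ).to_countable.exists_cycleOn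
    ⟨f, hf⟩
  choose σ hσ using hcyc
  have hcrt : ∀ d : ℕ, ∃ k : ℕ, ∀ q ∈ d.primeFactors,
      k ≡ q ^ (d.factorization q - 1) * idx (σ d.primeFactors q) [MOD q ^ d.factorization q] := by
    intro d
    obtain ⟨k, hk⟩ := Nat.chineseRemainderOfFinset
      (fun q => q ^ (d.factorization q - 1) * idx (σ d.primeFactors q))
      (fun q => q ^ d.factorization q) d.primeFactors
      (fun q hq => pow_ne_zero _ (Nat.prime_of_mem_primeFactors hq).ne_zero)
      (fun q hq q' hq' hne => Nat.Coprime.pow _ _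
        ((Nat.coprime_primes (Nat.prime_of_mem_primeFactors hq)
          (Nat.prime_of_mem_primeFactors hq')).2 hne))
    exact ⟨k, hk⟩
  choose a ha using hcrt
  refine ⟨fun d => (a d : ℤ), ?_⟩
  rintro _ ⟨d, hd, hd1, rfl⟩ _ ⟨d', hd', hd1', rfl⟩ hne ⟨x, hx, hx'⟩
  simp only at hx hx' ⊢
  by_contra hcop
  apply hne
  have hn0 : n ≠ 0 := by omega
  have hS : d.primeFactors ⊆ n.primeFactors := Nat.primeFactors_mono hd hn0
  have hS' : d'.primeFactors ⊆ n.primeFactors := Nat.primeFactors_mono hd' hn0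
  have key : ∀ q ∈ d.primeFactors, q ∈ d'.primeFactors →
      d.factorization q = d'.factorization q ∧ σ d.primeFactors q = σ d'.primeFactors q := by
    intro q hq hq'
    have hqp := Nat.prime_of_mem_primeFactors hq
    have e1 : 1 ≤ d.factorization q :=
      hqp.factorization_pos_of_dvd (by omega) (Nat.dvd_of_mem_primeFactors hq)
    have e1' : 1 ≤ d'.factorization q :=
      hqp.factorization_pos_of_dvd (by omega) (Nat.dvd_of_mem_primeFactors hq')
    have m1 : σ d.primeFactors q ∈ d.primeFactors := (hσ d.primeFactors).1.mapsTo hq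
    have m1' : σ d'.primeFactors q ∈ d'.primeFactors := (hσ d'.primeFactors).1.mapsTo hq'
    have c1 := hidx _ (hS m1)
    have c1' := hidx _ (hS' m1')
    have b := hb q (hS hq)
    have hdq : q ^ d.factorization q ∣ d := Nat.ordProj_dvd d q
    have hdq' : q ^ d'.factorization q ∣ d' := Nat.ordProj_dvd d' q
    have hmod : ∀ e, e ≤ d.factorization q → e ≤ d'.factorization q →
        q ^ (d.factorization q - 1) * idx (σ d.primeFactors q) ≡
        q ^ (d'.factorization q - 1) * idx (σ d'.primeFactors q) [MOD q ^ e] := by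
      intro e he he'
      have t1 := pow_dvd_pow q he
      have t2 := pow_dvd_pow q he'
      have h1 : (a d : ℤ) ≡ a d' [ZMOD ((q ^ e : ℕ) : ℤ)] :=
        (hx.of_dvd (Int.natCast_dvd_natCast.2 (t1.trans hdq))).symm.trans
          (hx'.of_dvd (Int.natCast_dvd_natCast.2 (t2.trans hdq')))
      have h2 : a d ≡ a d' [MOD q ^ e] := (Int.natCast_modEq_iff).1 h1
      exact (((ha d q hq).of_dvd t1).symm.trans h2).trans ((ha d' q hq').of_dvd t2)
    rcases lt_trichotomy (d.factorization q) (d'.factorization q) with hl | hl | hl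
    · exact (key_lt q _ _ _ _ _ hqp e1 c1.1 c1.2
        (b.2 (((pow_dvd_pow q (by omega)).trans hdq').trans hd')) hl
        (hmod _ le_rfl hl.le)).elim
    · refine ⟨hl, hinj (hS m1) (hS' m1') ?_⟩
      have := hmod _ le_rfl hl.le
      rw [← hl] at this
      exact key_eq q _ _ _ hqp e1 c1.1 c1'.1 (c1.2.trans b.1) (c1'.2.trans b.1) this
    · exact (key_lt q _ _ _ _ _ hqp e1' c1'.1 c1'.2
        (b.2 (((pow_dvd_pow q (by omega)).trans hdq).trans hd)) hl
        (hmod _ hl.le le_rfl).symm).elim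
  obtain ⟨q, hqp, hqd, hqd'⟩ := Nat.Prime.not_coprime_iff_dvd.1 hcop
  have hq : q ∈ d.primeFactors := Nat.mem_primeFactors.2 ⟨hqp, hqd, by omega⟩
  have hq' : q ∈ d'.primeFactors := Nat.mem_primeFactors.2 ⟨hqp, hqd', by omega⟩
  have hST : d.primeFactors = d'.primeFactors := Finset.Subset.antisymm
    (cycle_sub _ _ _ _ (hσ _) (hσ _) (fun q hq hq' => (key q hq hq').2) q hq hq')
    (cycle_sub _ _ _ _ (hσ _) (hσ _) (fun q hq hq' => (key q hq' hq).2.symm) q hq' hq)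
  have hdd : d = d' := by
    refine Nat.eq_of_factorization_eq (by omega) (by omega) fun q => ?_
    by_cases hq : q ∈ d.primeFactors
    · exact (key q hq (hST ▸ hq)).1
    · have hq' : q ∉ d'.primeFactors := hST ▸ hq
      rw [← Nat.support_factorization, Finsupp.notMem_support_iff] at hq hq'
      rw [hq, hq']
  rw [hdd]
end

section
/- For every prime p and every integer k ≥ 1, the integer n = p^k is nice. -/
theorem primePow_nice (p k : ℕ) (hp : p.Prime) (hk : 1 ≤ k) : IsNice (p ^ k) := by
  have key : ∀ i j : ℕ, i < j → ¬ ∃ x : ℤ,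
      x ≡ ((p ^ (i + 1) / p : ℕ) : ℤ) [ZMOD ((p ^ (i + 1) : ℕ) : ℤ)] ∧
      x ≡ ((p ^ (j + 1) / p : ℕ) : ℤ) [ZMOD ((p ^ (j + 1) : ℕ) : ℤ)] := by
    rintro i j hij ⟨x, h1, h2⟩
    rw [pow_succ p i, Nat.mul_div_cancel _ hp.pos, ← pow_succ] at h1
    rw [pow_succ p j, Nat.mul_div_cancel _ hp.pos, ← pow_succ] at h2
    have hd : p ^ (i + 1) ∣ p ^ (j + 1) := pow_dvd_pow p (by omega)
    have h3 := h2.of_dvd (Int.natCast_dvd_natCast.mpr hd)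
    have h4 : p ^ i ≡ p ^ j [MOD p ^ (i + 1)] := Int.natCast_modEq_iff.mp (h1.symm.trans h3)
    have h5 : p ^ (i + 1) ∣ p ^ i := (h4.dvd_iff dvd_rfl).mpr (pow_dvd_pow p hij)
    have h6 := (Nat.pow_dvd_pow_iff_le_right hp.one_lt).mp h5
    omega
  refine ⟨fun d => ((d / p : ℕ) : ℤ), ?_⟩
  rintro _ ⟨d, hd, hd1, rfl⟩ _ ⟨e, he, he1, rfl⟩ hne ⟨x, hx1, hx2⟩
  exfalso
  obtain ⟨i, -, rfl⟩ := (Nat.dvd_prime_pow hp).mp hd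
  obtain ⟨j, -, rfl⟩ := (Nat.dvd_prime_pow hp).mp he
  cases i with
  | zero => simp at hd1
  | succ i =>
    cases j with
    | zero => simp at he1
    | succ j =>
      rcases lt_trichotomy i j with h | h | h
      · exact key i j h ⟨x, hx1, hx2⟩
      · subst h
        exact hne rfl
      · exact key j i h ⟨x, hx2, hx1⟩
end

section
/- For all primes p_1 < p_2 and every integer k ≥ 1, the integer n = p_1 · p_2^k is nice. -/
theorem aux_val (q : ℕ) (hq : 3 ≤ q) (i j : ℕ) (x c c' : ℤ) (hij : i < j)
    (hc : c = 1 ∨ c = 2)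
    (h1 : x ≡ c * (q : ℤ) ^ i [ZMOD (q : ℤ) ^ (i + 1)])
    (h2 : x ≡ c' * (q : ℤ) ^ j [ZMOD (q : ℤ) ^ (j + 1)]) : False := by
  have hq0 : (0 : ℤ) < (q : ℤ) ^ i := by positivity
  have hd : (q : ℤ) ^ (i + 1) ∣ x := by
    have h4 : (q : ℤ) ^ (i + 1) ∣ (q : ℤ) ^ j := pow_dvd_pow _ hij
    have h5 : (q : ℤ) ^ (i + 1) ∣ (q : ℤ) ^ (j + 1) := pow_dvd_pow _ (by omega)
    have h6 := h5.trans h2.dvd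
    exact (dvd_sub_right (Dvd.dvd.mul_left h4 c')).1 h6
  have h7 : (q : ℤ) ^ (i + 1) ∣ c * (q : ℤ) ^ i := (dvd_sub_left hd).1 h1.dvd
  rw [pow_succ', mul_dvd_mul_iff_right hq0.ne'] at h7
  have h8 := Int.le_of_dvd (by omega) h7
  omega

theorem aux_val' (q : ℕ) (hq : 3 ≤ q) (i j : ℕ) (x c c' : ℤ)
    (hc : c = 1 ∨ c = 2) (hc' : c' = 1 ∨ c' = 2)
    (h1 : x ≡ c * (q : ℤ) ^ i [ZMOD (q : ℤ) ^ (i + 1)])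
    (h2 : x ≡ c' * (q : ℤ) ^ j [ZMOD (q : ℤ) ^ (j + 1)]) : i = j ∧ c = c' := by
  rcases lt_trichotomy i j with h | h | h
  · exact (aux_val q hq i j x c c' h hc h1 h2).elim
  · subst h
    refine ⟨rfl, ?_⟩
    have hq0 : (0 : ℤ) < (q : ℤ) ^ i := by positivity
    have h3 := (h1.symm.trans h2).dvd
    rw [← sub_mul, pow_succ', mul_dvd_mul_iff_right hq0.ne'] at h3
    have h4 := Int.eq_zero_of_abs_lt_dvd h3 (by rw [abs_lt]; omega)
    omega
  · exact (aux_val q hq j i x c' c h hc' h2 h1).elim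

theorem primeTimesPrimePow_nice (p₁ p₂ k : ℕ) (hp₁ : p₁.Prime) (hp₂ : p₂.Prime)
    (hlt : p₁ < p₂) (hk : 1 ≤ k) : IsNice (p₁ * p₂ ^ k) := by
  have hq : 3 ≤ p₂ := by have := hp₁.two_le; omega
  have hcop : Nat.Coprime p₁ p₂ := (Nat.coprime_primes hp₁ hp₂).2 hlt.ne
  have hB : ∀ j : ℕ, ∃ b : ℤ, b ≡ 1 [ZMOD (p₁ : ℤ)] ∧
      b ≡ 2 * (p₂ : ℤ) ^ j [ZMOD (p₂ : ℤ) ^ (j + 1)] := by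
    intro j
    obtain ⟨b, h1, h2⟩ := Nat.chineseRemainder (hcop.pow_right (j + 1)) 1 (2 * p₂ ^ j)
    refine ⟨b, ?_, ?_⟩
    · exact_mod_cast Int.natCast_modEq_iff.2 h1
    · exact_mod_cast Int.natCast_modEq_iff.2 h2
  choose B hB1 hB2 using hB
  -- specification of the residue attached to a divisor
  have hex : ∀ d : ℕ, ∃ z : ℤ, d ∣ p₁ * p₂ ^ k → 1 < d →
      (d = p₁ ∧ z ≡ 0 [ZMOD (p₁ : ℤ)]) ∨
      (∃ j c, (d = p₂ ^ (j + 1) ∧ c = 1 ∨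
        d = p₁ * p₂ ^ (j + 1) ∧ c = 2 ∧ z ≡ 1 [ZMOD (p₁ : ℤ)]) ∧
        z ≡ c * (p₂ : ℤ) ^ j [ZMOD (p₂ : ℤ) ^ (j + 1)]) := by
    intro d
    by_cases hd : d ∣ p₁ * p₂ ^ k ∧ 1 < d
    swap
    · exact ⟨0, fun h1 h2 => (hd ⟨h1, h2⟩).elim⟩
    obtain ⟨u, v, hu, hv, rfl⟩ := exists_dvd_and_dvd_of_dvd_mul hd.1
    obtain ⟨m, -, rfl⟩ := (Nat.dvd_prime_pow hp₂).1 hv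
    rcases (Nat.dvd_prime hp₁).1 hu with rfl | rfl
    · rcases m with _ | j
      · simp at hd
      · exact ⟨(p₂ : ℤ) ^ j, fun _ _ => Or.inr ⟨j, 1, Or.inl ⟨by simp, rfl⟩, by simp⟩⟩
    · rcases m with _ | j
      · exact ⟨0, fun _ _ => Or.inl ⟨by simp, rfl⟩⟩
      · exact ⟨B j, fun _ _ => Or.inr ⟨j, 2, Or.inr ⟨rfl, rfl, hB1 j⟩, hB2 j⟩⟩
  choose a ha using hex
  have h01 : ∀ x : ℤ, x ≡ 0 [ZMOD (p₁ : ℤ)] → x ≡ 1 [ZMOD (p₁ : ℤ)] → False := by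
    intro x h0 h1
    have h := (h0.symm.trans h1).dvd
    have h2 := Int.le_of_dvd (by norm_num) h
    have := hp₁.two_le
    omega
  refine ⟨a, ?_⟩
  rintro _ ⟨d, hd, hd1, rfl⟩ _ ⟨e, he, he1, rfl⟩ hne ⟨x, hx, hy⟩
  have hde : d ≠ e := by rintro rfl; exact hne rfl
  simp only at hx hy ⊢
  have down : ∀ (f : ℕ) (z : ℤ) (m : ℕ), m ∣ f → x ≡ z [ZMOD (f : ℤ)] → x ≡ z [ZMOD (m : ℤ)] :=
    fun f z m hm h => h.of_dvd (Int.natCast_dvd_natCast.2 hm)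
  rcases ha d hd hd1 with ⟨h1, h2⟩ | ⟨i, c, h1, h2⟩ <;>
  rcases ha e he he1 with ⟨h3, h4⟩ | ⟨j, c', h3, h4⟩
  · exact (hde (h1.trans h3.symm)).elim
  · rcases h3 with ⟨h3, -⟩ | ⟨h3, -, h5⟩
    · rw [h1, h3]; exact hcop.pow_right _
    · exact (h01 x ((down d _ p₁ h1.symm.dvd hx).trans h2)
        ((down e _ p₁ (h3 ▸ dvd_mul_right _ _) hy).trans h5)).elim
  · rcases h1 with ⟨h1, -⟩ | ⟨h1, -, h5⟩
    · rw [h1, h3]; exact (hcop.pow_right _).symm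
    · exact (h01 x ((down e _ p₁ h3.symm.dvd hy).trans h4)
        ((down d _ p₁ (h1 ▸ dvd_mul_right _ _) hx).trans h5)).elim
  · exfalso
    have hdi : p₂ ^ (i + 1) ∣ d := by
      rcases h1 with ⟨h1, -⟩ | ⟨h1, -⟩ <;> rw [h1]
      exact dvd_mul_left _ _
    have hej : p₂ ^ (j + 1) ∣ e := by
      rcases h3 with ⟨h3, -⟩ | ⟨h3, -⟩ <;> rw [h3]
      exact dvd_mul_left _ _
    have hx' := down d _ _ hdi hx
    have hy' := down e _ _ hej hy
    push_cast at hx' hy'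
    obtain ⟨hij, hcc⟩ := aux_val' p₂ hq i j x c c' (by tauto) (by tauto)
      (hx'.trans h2) (hy'.trans h4)
    subst hij
    rcases h1 with ⟨h1, h5⟩ | ⟨h1, h5, -⟩ <;> rcases h3 with ⟨h3, h6⟩ | ⟨h3, h6, -⟩
    · exact hde (h1.trans h3.symm)
    · omega
    · omega
    · exact hde (h1.trans h3.symm)
end

section
/- Let p_1 < p_2 be primes, let k ≥ 1 be an integer, and let a be an integer with a ≢ 0 (mod p_2) and a · p_1 ≢ 1 (mod p_2). Then the set of congruences {0 (mod p_1)} ∪ { p_2^{i-1} + 1 (mod p_2^i) : 1 ≤ i ≤ k } ∪ { a·p_1·p_2^{i-1} + 1 (mod p_1·p_2^i) : 1 ≤ i ≤ k } is good. -/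
lemma key_lt_s8 (p : ℕ) (hp : p.Prime) (u v x : ℤ) (m n : ℕ) (hu : ¬ (p : ℤ) ∣ u) (hmn : m < n)
    (h1 : (p : ℤ) ^ (m + 1) ∣ x - (u * (p : ℤ) ^ m + 1))
    (h2 : (p : ℤ) ^ (n + 1) ∣ x - (v * (p : ℤ) ^ n + 1)) : False := by
  have hp0 : (p : ℤ) ^ m ≠ 0 := pow_ne_zero _ (by exact_mod_cast hp.ne_zero)
  have h3 : (p : ℤ) ^ (m + 1) ∣ (p : ℤ) ^ n := pow_dvd_pow _ hmn
  have h4 : (p : ℤ) ^ (m + 1) ∣ x - (v * (p : ℤ) ^ n + 1) :=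
    (pow_dvd_pow _ (by omega)).trans h2
  have h5 : (p : ℤ) ^ (m + 1) ∣ u * (p : ℤ) ^ m := by
    have := dvd_add (dvd_sub h4 h1) (h3.mul_left v)
    rwa [show x - (v * (p : ℤ) ^ n + 1) - (x - (u * (p : ℤ) ^ m + 1)) + v * (p : ℤ) ^ n
      = u * (p : ℤ) ^ m by ring] at this
  rw [pow_succ, mul_comm u] at h5
  exact hu ((mul_dvd_mul_iff_left hp0).1 h5)

lemma key_main (p : ℕ) (hp : p.Prime) (u v x : ℤ) (m n : ℕ) (hu : ¬ (p : ℤ) ∣ u)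
    (hv : ¬ (p : ℤ) ∣ v)
    (h1 : (p : ℤ) ^ (m + 1) ∣ x - (u * (p : ℤ) ^ m + 1))
    (h2 : (p : ℤ) ^ (n + 1) ∣ x - (v * (p : ℤ) ^ n + 1)) : m = n ∧ (p : ℤ) ∣ u - v := by
  rcases lt_trichotomy m n with h | h | h
  · exact (key_lt_s8 p hp u v x m n hu h h1 h2).elim
  · subst h
    have hp0 : (p : ℤ) ^ m ≠ 0 := pow_ne_zero _ (by exact_mod_cast hp.ne_zero)
    refine ⟨rfl, ?_⟩
    have := dvd_sub h2 h1
    have h5 : (p : ℤ) ^ m * p ∣ (p : ℤ) ^ m * (u - v) := by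
      rw [← pow_succ]
      rwa [show x - (v * (p : ℤ) ^ m + 1) - (x - (u * (p : ℤ) ^ m + 1))
        = (p : ℤ) ^ m * (u - v) by ring] at this
    exact (mul_dvd_mul_iff_left hp0).1 h5
  · exact (key_lt_s8 p hp v u x n m hv h h2 h1).elim

theorem primeTimesPrimePow_good (p₁ p₂ k : ℕ) (a : ℤ) (hp₁ : p₁.Prime)
    (hp₂ : p₂.Prime) (hlt : p₁ < p₂) (hk : 1 ≤ k)
    (ha₀ : ¬ a ≡ 0 [ZMOD (p₂ : ℤ)]) (ha₁ : ¬ a * (p₁ : ℤ) ≡ 1 [ZMOD (p₂ : ℤ)]) :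
    IsGood ({((0 : ℤ), p₁)} ∪
      {c : ℤ × ℕ | ∃ i : ℕ, 1 ≤ i ∧ i ≤ k ∧ c = ((p₂ : ℤ) ^ (i - 1) + 1, p₂ ^ i)} ∪
      {c : ℤ × ℕ | ∃ i : ℕ, 1 ≤ i ∧ i ≤ k ∧
        c = (a * (p₁ : ℤ) * (p₂ : ℤ) ^ (i - 1) + 1, p₁ * p₂ ^ i)}) := by
  have hpi : Prime (p₂ : ℤ) := Nat.prime_iff_prime_int.1 hp₂
  have hco : Nat.Coprime p₁ p₂ := (Nat.coprime_primes hp₁ hp₂).2 hlt.ne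
  have n1 : ¬ (p₂ : ℤ) ∣ 1 := fun h => hpi.not_isUnit (isUnit_of_dvd_one h)
  have n1' : ¬ (p₁ : ℤ) ∣ 1 := fun h =>
    (Nat.prime_iff_prime_int.1 hp₁).not_isUnit (isUnit_of_dvd_one h)
  have na : ¬ (p₂ : ℤ) ∣ a * p₁ := by
    intro h
    rcases hpi.dvd_or_dvd h with h | h
    · exact ha₀ (Int.modEq_zero_iff_dvd.2 h)
    · exact absurd (Nat.le_of_dvd hp₁.pos (Int.natCast_dvd_natCast.1 h)) (by omega)
  have nd : ¬ (p₂ : ℤ) ∣ a * p₁ - 1 := fun h => ha₁ (Int.modEq_iff_dvd.2 h).symm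
  have hAC : ∀ (x : ℤ) (m : ℕ), (p₁ : ℤ) ∣ x →
      (p₁ : ℤ) ∣ x - (a * p₁ * (p₂ : ℤ) ^ m + 1) → False := by
    intro x m h h'
    apply n1'
    have := dvd_sub (dvd_sub h h') (Dvd.intro_left (a * (p₂ : ℤ) ^ m) rfl : (p₁ : ℤ) ∣ _)
    rwa [show x - (x - (a * p₁ * (p₂ : ℤ) ^ m + 1)) - a * (p₂ : ℤ) ^ m * p₁
      = 1 by ring] at this
  have hs : ∀ m : ℕ, m + 1 - 1 = m := fun m => rfl
  rintro c₁ ((h | ⟨i, hi, -, h⟩) | ⟨i, hi, -, h⟩) c₂ ((h' | ⟨j, hj, -, h'⟩) | ⟨j, hj, -, h'⟩)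
    hne ⟨x, hx, hx'⟩ <;> (try rw [Set.mem_singleton_iff] at h) <;>
    (try rw [Set.mem_singleton_iff] at h') <;> subst h <;> subst h' <;>
    (try obtain ⟨m, rfl⟩ := Nat.exists_eq_add_of_le' hi) <;>
    (try obtain ⟨n, rfl⟩ := Nat.exists_eq_add_of_le' hj) <;>
    have hx := hx.symm.dvd <;> have hx' := hx'.symm.dvd <;>
    simp only [hs, sub_zero, Nat.cast_mul, Nat.cast_pow] at hx hx' hne ⊢
  · exact (hne rfl).elim
  · exact hco.pow_right _
  · exact (hAC x n hx ((Dvd.intro _ rfl).trans hx')).elim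
  · exact (hco.pow_right _).symm
  · obtain ⟨rfl, -⟩ := key_main p₂ hp₂ 1 1 x m n n1 n1 (by simpa using hx) (by simpa using hx')
    exact (hne rfl).elim
  · exact (nd (by
      have := (key_main p₂ hp₂ (a * p₁) 1 x n m na n1
        ((Dvd.intro_left _ rfl).trans hx') (by simpa using hx)).2
      exact this)).elim
  · exact (hAC x m hx' ((Dvd.intro _ rfl).trans hx)).elim
  · exact (nd (key_main p₂ hp₂ (a * p₁) 1 x m n na n1
        ((Dvd.intro_left _ rfl).trans hx) (by simpa using hx')).2).elim
  · obtain ⟨rfl, -⟩ := key_main p₂ hp₂ (a * p₁) (a * p₁) x m n na na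
      ((Dvd.intro_left _ rfl).trans hx) ((Dvd.intro_left _ rfl).trans hx')
    exact (hne rfl).elim
end

section
/- Let p_1 < p_2 be odd primes, let a be an integer, let b, c, d be three integers that are pairwise incongruent modulo p_2, and let α_1 ≥ 1 and α_2 ≥ 1 be integers. Then there exist integers a_{i,j} for 1 ≤ i ≤ α_1 and 1 ≤ j ≤ α_2 such that the set of congruences { a_{i,j} (mod p_1^i · p_2^j) : 1 ≤ i ≤ α_1, 1 ≤ j ≤ α_2 } is good, and moreover each a_{i,j} satisfies a_{i,j} ≡ a (mod p_1) and a_{i,j} is congruent modulo p_2 to one of b, c, d. -/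
/-- The residue used for the prime `p₂` at level `j`: after `j - 1` copies of the
default digit, the digit of type `e`. -/
def levelRes (p : ℕ) (b c d : ℤ) (e j : ℕ) : ℤ :=
  if j = 1 then (if e = 1 then c else d) else b + e * (p : ℤ) ^ (j - 1)

/-- A congruence between two level residues at levels `j ≤ j'` forces equality. -/
lemma levelRes_eq_of_le (p : ℕ) (h3 : 3 ≤ p) (b c d : ℤ)
    (hbc : ¬ b ≡ c [ZMOD (p : ℤ)]) (hbd : ¬ b ≡ d [ZMOD (p : ℤ)])
    (hcd : ¬ c ≡ d [ZMOD (p : ℤ)]) (e e' j j' : ℕ)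
    (he : e = 1 ∨ e = 2) (he' : e' = 1 ∨ e' = 2) (hj : 1 ≤ j) (hjj : j ≤ j')
    (h : levelRes p b c d e j ≡ levelRes p b c d e' j' [ZMOD (p : ℤ) ^ j]) :
    j = j' ∧ e = e' := by
  have hp0 : (p : ℤ) ≠ 0 := by positivity
  have hdc : ¬ d ≡ c [ZMOD (p : ℤ)] := fun h => hcd h.symm
  have small : ∀ z : ℤ, |z| < 3 → (p : ℤ) ∣ z → z = 0 := fun z hz hd =>
    Int.eq_zero_of_abs_lt_dvd hd (by omega)
  unfold levelRes at h
  by_cases h1 : j = 1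
  · subst h1
    by_cases h1' : j' = 1
    · subst h1'
      refine ⟨rfl, ?_⟩
      rcases he with rfl | rfl <;> rcases he' with rfl | rfl <;> simp_all
    · exfalso
      rw [if_pos rfl, if_neg h1', pow_one] at h
      have hb : b + e' * (p : ℤ) ^ (j' - 1) ≡ b [ZMOD (p : ℤ)] := by
        refine (Int.modEq_iff_dvd.mpr ?_).symm
        rw [add_sub_cancel_left]
        exact Dvd.dvd.mul_left (dvd_pow_self _ (by omega)) _
      have h' := (h.trans hb).symm
      split_ifs at h'
      · exact hbc h'
      · exact hbd h'
  · rw [if_neg h1, if_neg (by omega)] at h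
    obtain ⟨k, rfl⟩ : ∃ k, j = k + 1 := ⟨j - 1, by omega⟩
    obtain ⟨m, rfl⟩ : ∃ m, j' = k + 1 + m := ⟨j' - (k + 1), by omega⟩
    have h2 := h.dvd
    have e1 : k + 1 + m - 1 = k + m := by omega
    rw [e1, Nat.add_sub_cancel, show b + e' * (p : ℤ) ^ (k + m) - (b + e * (p : ℤ) ^ k)
      = (p : ℤ) ^ k * (e' * (p : ℤ) ^ m - e) by ring, pow_succ] at h2
    have h3 := Int.dvd_of_mul_dvd_mul_left (pow_ne_zero k hp0) h2
    rcases Nat.eq_zero_or_pos m with rfl | hm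
    · refine ⟨rfl, ?_⟩
      have := small _ (by rcases he with rfl | rfl <;> rcases he' with rfl | rfl <;> norm_num) h3
      simp only [pow_zero, mul_one] at this
      omega
    · exfalso
      have h4 : (p : ℤ) ∣ e := by
        have h5 : (p : ℤ) ∣ e' * (p : ℤ) ^ m := Dvd.dvd.mul_left (dvd_pow_self _ hm.ne') _
        have := dvd_sub h5 h3
        simpa using this
      have := small _ (by rcases he with rfl | rfl <;> norm_num) h4
      omega

lemma levelRes_eq (p : ℕ) (h3 : 3 ≤ p) (b c d : ℤ)
    (hbc : ¬ b ≡ c [ZMOD (p : ℤ)]) (hbd : ¬ b ≡ d [ZMOD (p : ℤ)])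
    (hcd : ¬ c ≡ d [ZMOD (p : ℤ)]) (e e' j j' : ℕ)
    (he : e = 1 ∨ e = 2) (he' : e' = 1 ∨ e' = 2) (hj : 1 ≤ j) (hj' : 1 ≤ j') (x : ℤ)
    (h : x ≡ levelRes p b c d e j [ZMOD (p : ℤ) ^ j])
    (h' : x ≡ levelRes p b c d e' j' [ZMOD (p : ℤ) ^ j']) :
    j = j' ∧ e = e' := by
  rcases le_total j j' with hl | hl
  · exact levelRes_eq_of_le p h3 b c d hbc hbd hcd e e' j j' he he' hj hl
      (h.symm.trans (h'.of_dvd (pow_dvd_pow _ hl)))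
  · have := levelRes_eq_of_le p h3 b c d hbc hbd hcd e' e j' j he' he hj' hl
      (h'.symm.trans (h.of_dvd (pow_dvd_pow _ hl)))
    exact ⟨this.1.symm, this.2.symm⟩

/-- Residues for `p₁`: levels at least two are separated from each other. -/
lemma firstRes_eq_of_le (p : ℕ) (h3 : 3 ≤ p) (a : ℤ) (i i' : ℕ) (hi : 2 ≤ i) (hii : i ≤ i')
    (h : a + (p : ℤ) ^ (i - 1) ≡ a + (p : ℤ) ^ (i' - 1) [ZMOD (p : ℤ) ^ i]) : i = i' := by
  by_contra hne
  have hp0 : (p : ℤ) ≠ 0 := by positivity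
  obtain ⟨k, rfl⟩ : ∃ k, i = k + 1 := ⟨i - 1, by omega⟩
  have h2 := (Int.ModEq.add_left_cancel' a h).symm.dvd
  rw [Nat.add_sub_cancel] at h2
  have h5 : (p : ℤ) ^ (k + 1) ∣ (p : ℤ) ^ (i' - 1) := pow_dvd_pow _ (by omega)
  have h6 : (p : ℤ) ^ (k + 1) ∣ (p : ℤ) ^ k := by simpa using dvd_add h2 h5
  rw [pow_succ] at h6
  have h7 : (p : ℤ) ^ k * p ∣ (p : ℤ) ^ k * 1 := by simpa using h6
  have h8 := Int.le_of_dvd one_pos (Int.dvd_of_mul_dvd_mul_left (pow_ne_zero k hp0) h7)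
  omega

lemma firstRes_eq (p : ℕ) (h3 : 3 ≤ p) (a : ℤ) (i i' : ℕ) (hi : 2 ≤ i) (hi' : 2 ≤ i') (x : ℤ)
    (h : x ≡ a + (p : ℤ) ^ (i - 1) [ZMOD (p : ℤ) ^ i])
    (h' : x ≡ a + (p : ℤ) ^ (i' - 1) [ZMOD (p : ℤ) ^ i']) : i = i' := by
  rcases le_total i i' with hl | hl
  · exact firstRes_eq_of_le p h3 a i i' hi hl (h.symm.trans (h'.of_dvd (pow_dvd_pow _ hl)))
  · exact (firstRes_eq_of_le p h3 a i' i hi' hl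
      (h'.symm.trans (h.of_dvd (pow_dvd_pow _ hl)))).symm

lemma int_crt (m n x y : ℤ) (h : IsCoprime m n) :
    ∃ z : ℤ, z ≡ x [ZMOD m] ∧ z ≡ y [ZMOD n] := by
  obtain ⟨u, v, huv⟩ := h
  refine ⟨x * (v * n) + y * (u * m), ?_, ?_⟩
  · refine (Int.modEq_iff_dvd.mpr ⟨u * (y - x), ?_⟩).symm
    linear_combination x * huv
  · refine (Int.modEq_iff_dvd.mpr ⟨v * (x - y), ?_⟩).symm
    linear_combination y * huv

theorem twoFactor_good (p₁ p₂ : ℕ) (hp₁ : p₁.Prime) (hp₂ : p₂.Prime)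
    (hodd₁ : Odd p₁) (hodd₂ : Odd p₂) (hlt : p₁ < p₂)
    (a b c d : ℤ)
    (hbc : ¬ b ≡ c [ZMOD (p₂ : ℤ)]) (hbd : ¬ b ≡ d [ZMOD (p₂ : ℤ)])
    (hcd : ¬ c ≡ d [ZMOD (p₂ : ℤ)])
    (α₁ α₂ : ℕ) (hα₁ : 1 ≤ α₁) (hα₂ : 1 ≤ α₂) :
    ∃ f : ℕ → ℕ → ℤ,
      IsGood {x : ℤ × ℕ | ∃ i j : ℕ, 1 ≤ i ∧ i ≤ α₁ ∧ 1 ≤ j ∧ j ≤ α₂ ∧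
        x = (f i j, p₁ ^ i * p₂ ^ j)} ∧
      ∀ i j : ℕ, 1 ≤ i → i ≤ α₁ → 1 ≤ j → j ≤ α₂ →
        f i j ≡ a [ZMOD (p₁ : ℤ)] ∧
        (f i j ≡ b [ZMOD (p₂ : ℤ)] ∨ f i j ≡ c [ZMOD (p₂ : ℤ)] ∨
          f i j ≡ d [ZMOD (p₂ : ℤ)]) := by
  have h31 : 3 ≤ p₁ := by
    have := hp₁.two_le
    obtain ⟨k, hk⟩ := hodd₁
    omega
  have h32 : 3 ≤ p₂ := by omega
  have hcop : ∀ i j : ℕ, IsCoprime ((p₁ : ℤ) ^ i) ((p₂ : ℤ) ^ j) := fun i j =>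
    (Nat.isCoprime_iff_coprime.mpr ((Nat.coprime_primes hp₁ hp₂).mpr hlt.ne)).pow
  choose f hf1 hf2 using fun i j : ℕ => int_crt ((p₁ : ℤ) ^ i) ((p₂ : ℤ) ^ j)
    (if i = 1 then a else a + (p₁ : ℤ) ^ (i - 1))
    (levelRes p₂ b c d (if i = 1 then 1 else 2) j) (hcop i j)
  refine ⟨f, ?_, ?_⟩
  · rintro _ ⟨i, j, hi, -, hj, -, rfl⟩ _ ⟨i', j', hi', -, hj', -, rfl⟩ hne ⟨x, hx, hx'⟩
    exfalso
    apply hne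
    simp only [Nat.cast_mul, Nat.cast_pow] at hx hx'
    have hx1 := (hx.of_dvd (Dvd.intro _ rfl)).trans (hf1 i j)
    have hx2 := (hx.of_dvd (Dvd.intro_left _ rfl)).trans (hf2 i j)
    have hx1' := (hx'.of_dvd (Dvd.intro _ rfl)).trans (hf1 i' j')
    have hx2' := (hx'.of_dvd (Dvd.intro_left _ rfl)).trans (hf2 i' j')
    obtain ⟨rfl, he⟩ := levelRes_eq p₂ h32 b c d hbc hbd hcd _ _ j j'
      (by split_ifs <;> simp) (by split_ifs <;> simp) hj hj' x hx2 hx2'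
    have hii : i = i' := by
      by_cases h1 : i = 1 <;> by_cases h1' : i' = 1
      · omega
      · simp [h1, h1'] at he
      · simp [h1, h1'] at he
      · rw [if_neg h1] at hx1
        rw [if_neg h1'] at hx1'
        exact firstRes_eq p₁ h31 a i i' (by omega) (by omega) x hx1 hx1'
    rw [hii]
  · intro i j hi _ hj _
    have g1 := (hf1 i j).of_dvd (dvd_pow_self _ (by omega : i ≠ 0))
    have g2 := (hf2 i j).of_dvd (dvd_pow_self _ (by omega : j ≠ 0))
    constructor
    · refine g1.trans ?_
      split_ifs with h1
      · rfl
      · refine (Int.modEq_iff_dvd.mpr ?_).symm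
        rw [add_sub_cancel_left]
        exact dvd_pow_self _ (by omega)
    · unfold levelRes at g2
      by_cases h1 : j = 1
      · rw [if_pos h1] at g2
        split_ifs at g2 <;> tauto
      · rw [if_neg h1] at g2
        refine Or.inl (g2.trans (Int.modEq_iff_dvd.mpr ?_).symm)
        rw [add_sub_cancel_left]
        exact Dvd.dvd.mul_left (dvd_pow_self _ (by omega)) _
end

section
/- Let p_1 < p_2 be odd primes and let α_1 > 1 and α_2 > 1 be integers. Then n = p_1^{α_1} · p_2^{α_2} is nice. -/
theorem key_aux {p i k : ℕ} {c c' x : ℤ} (hp : p.Prime) (hodd : Odd p)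
    (hi : i ≠ 0) (hc : c = 1 ∨ c = 2) (hik : i < k)
    (h : x ≡ c * (p : ℤ) ^ (i - 1) [ZMOD (p : ℤ) ^ i])
    (h' : x ≡ c' * (p : ℤ) ^ (k - 1) [ZMOD (p : ℤ) ^ k]) : False := by
  have h3 : 3 ≤ p := by
    have := hp.two_le
    rcases hodd with ⟨m, rfl⟩; omega
  obtain ⟨i, rfl⟩ := Nat.exists_eq_succ_of_ne_zero hi
  have e1 : (p : ℤ) ^ (i + 1) ∣ x := by
    have d1 : (p : ℤ) ^ (i + 1) ∣ (p : ℤ) ^ k := pow_dvd_pow _ (by omega)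
    have d2 : (p : ℤ) ^ (i + 1) ∣ c' * (p : ℤ) ^ (k - 1) :=
      Dvd.dvd.mul_left (pow_dvd_pow _ (by omega)) _
    have d3 := d1.trans h'.dvd
    exact (dvd_sub_right d2).mp d3
  have e2 := h.dvd
  have e3 : (p : ℤ) ^ (i + 1) ∣ c * (p : ℤ) ^ i := (dvd_sub_left e1).mp e2
  rw [pow_succ, mul_comm] at e3
  have hp0 : (p : ℤ) ^ i ≠ 0 := pow_ne_zero _ (by exact_mod_cast hp.ne_zero)
  have e4 := (mul_dvd_mul_iff_right hp0).mp e3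
  have := Int.le_of_dvd (by rcases hc with rfl | rfl <;> norm_num) e4
  rcases hc with rfl | rfl <;> omega

theorem key {p i k : ℕ} {c c' x : ℤ} (hp : p.Prime) (hodd : Odd p)
    (hi : i ≠ 0) (hk : k ≠ 0) (hc : c = 1 ∨ c = 2) (hc' : c' = 1 ∨ c' = 2)
    (h : x ≡ c * (p : ℤ) ^ (i - 1) [ZMOD (p : ℤ) ^ i])
    (h' : x ≡ c' * (p : ℤ) ^ (k - 1) [ZMOD (p : ℤ) ^ k]) : i = k ∧ c = c' := by
  have hik : i = k := by
    rcases lt_trichotomy i k with hlt | heq | hgt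
    · exact (key_aux hp hodd hi hc hlt h h').elim
    · exact heq
    · exact (key_aux hp hodd hk hc' hgt h' h).elim
  subst hik
  refine ⟨rfl, ?_⟩
  have h3 : 3 ≤ p := by
    have := hp.two_le
    rcases hodd with ⟨m, rfl⟩; omega
  obtain ⟨i, rfl⟩ := Nat.exists_eq_succ_of_ne_zero hi
  have e := (h.symm.trans h').dvd
  have e3 : (p : ℤ) * (p : ℤ) ^ i ∣ (c' - c) * (p : ℤ) ^ i := by
    have : (p : ℤ) * (p : ℤ) ^ i = (p : ℤ) ^ (i + 1) := by ring
    rw [this, sub_mul]; exact e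
  have hp0 : (p : ℤ) ^ i ≠ 0 := pow_ne_zero _ (by exact_mod_cast hp.ne_zero)
  have e4 := (mul_dvd_mul_iff_right hp0).mp e3
  have e5 : c' - c = 0 := by
    apply Int.eq_zero_of_abs_lt_dvd e4
    rcases hc with rfl | rfl <;> rcases hc' with rfl | rfl <;> norm_num <;> omega
  omega

theorem twoOddPrimePow_nice (p₁ p₂ α₁ α₂ : ℕ) (hp₁ : p₁.Prime) (hp₂ : p₂.Prime)
    (hodd₁ : Odd p₁) (hodd₂ : Odd p₂) (hlt : p₁ < p₂)
    (hα₁ : 1 < α₁) (hα₂ : 1 < α₂) : IsNice (p₁ ^ α₁ * p₂ ^ α₂) := by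
  have hcop : Nat.Coprime p₁ p₂ := (Nat.coprime_primes hp₁ hp₂).mpr hlt.ne
  have hex : ∀ i j : ℕ, ∃ a : ℤ,
      a ≡ (if j = 0 then 1 else 2) * (p₁ : ℤ) ^ (i - 1) [ZMOD (p₁ : ℤ) ^ i] ∧
      a ≡ (if i = 0 then 1 else 2) * (p₂ : ℤ) ^ (j - 1) [ZMOD (p₂ : ℤ) ^ j] := by
    intro i j
    obtain ⟨k, hk1, hk2⟩ := Nat.chineseRemainder (Nat.Coprime.pow i j hcop)
      ((if j = 0 then 1 else 2) * p₁ ^ (i - 1)) ((if i = 0 then 1 else 2) * p₂ ^ (j - 1))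
    refine ⟨k, ?_, ?_⟩
    · have := Int.natCast_modEq_iff.mpr hk1
      push_cast at this; exact this
    · have := Int.natCast_modEq_iff.mpr hk2
      push_cast at this; exact this
  choose A hA1 hA2 using hex
  refine ⟨fun d => A (d.factorization p₁) (d.factorization p₂), ?_⟩
  have hdiv : ∀ d, d ∣ p₁ ^ α₁ * p₂ ^ α₂ → ∃ i j, d = p₁ ^ i * p₂ ^ j ∧
      d.factorization p₁ = i ∧ d.factorization p₂ = j := by
    intro d hd
    obtain ⟨x, y, hx, hy, rfl⟩ := (Nat.dvd_mul).mp hd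
    obtain ⟨i, -, rfl⟩ := (Nat.dvd_prime_pow hp₁).mp hx
    obtain ⟨j, -, rfl⟩ := (Nat.dvd_prime_pow hp₂).mp hy
    refine ⟨i, j, rfl, ?_, ?_⟩ <;>
    rw [Nat.factorization_mul (pow_ne_zero _ hp₁.ne_zero) (pow_ne_zero _ hp₂.ne_zero),
      hp₁.factorization_pow, hp₂.factorization_pow] <;> simp [hlt.ne, hlt.ne']
  rintro _ ⟨d, hd, -, rfl⟩ _ ⟨e, he, -, rfl⟩ hne ⟨x, hx1, hx2⟩
  obtain ⟨i, j, hdij, hi, hj⟩ := hdiv d hd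
  obtain ⟨k, l, hekl, hk, hl⟩ := hdiv e he
  simp only [hi, hj, hk, hl] at hx1 hx2
  have hne' : ¬ (i = k ∧ j = l) := by
    rintro ⟨rfl, rfl⟩
    exact hne (by rw [hdij, hekl])
  rw [hdij] at hx1
  rw [hekl] at hx2
  push_cast at hx1 hx2
  have a1 := (hx1.of_mul_right _).trans (hA1 i j)
  have a2 := (hx1.of_mul_left _).trans (hA2 i j)
  have b1 := (hx2.of_mul_right _).trans (hA1 k l)
  have b2 := (hx2.of_mul_left _).trans (hA2 k l)
  have K1 := fun h h' => key hp₁ hodd₁ (i := i) (k := k) h h'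
    (by split_ifs <;> simp) (by split_ifs <;> simp) a1 b1
  have K2 := fun h h' => key hp₂ hodd₂ (i := j) (k := l) h h'
    (by split_ifs <;> simp) (by split_ifs <;> simp) a2 b2
  show Nat.Coprime d e
  rw [hdij, hekl]
  have C1 := Nat.Coprime.pow i l hcop
  have C2 := (Nat.Coprime.pow k j hcop).symm
  clear a1 a2 b1 b2 hx1 hx2 hA1 hA2 hdiv hne hd he hdij hekl hi hj hk hl hcop
  by_cases i0 : i = 0 <;> by_cases j0 : j = 0 <;> by_cases k0 : k = 0 <;>
    by_cases l0 : l = 0 <;> simp_all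
  · exact C2
  · exact C1
end

section
/- Let t ≥ 3, let p_1 < p_2 < ... < p_t be odd primes, and let α_1, α_2, ..., α_t ≥ 1 be integers. Let S be a set of residues modulo p_1·p_2·...·p_t of cardinality at least 2^t. Then there exist integers a_{(i_1,...,i_t)}, one for each t-tuple (i_1,...,i_t) with 1 ≤ i_k ≤ α_k for all 1 ≤ k ≤ t, such that the set of congruences { a_{(i_1,...,i_t)} (mod p_1^{i_1} · p_2^{i_2} · ... · p_t^{i_t}) } over all such tuples is good, and each a_{(i_1,...,i_t)} is congruent modulo p_1·p_2·...·p_t to an element of S. -/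
/-- The tail of base-`q` digits used for exponent `m`: `q + q^2 + ... + q^(m-2)`. -/
def digitTail (q m : ℕ) : ℕ := ∑ j ∈ Finset.Ico 1 (m - 1), q ^ j

/-- Tails for different exponents differ modulo the smaller power. -/
lemma digitTail_not_modEq (q m n : ℕ) (hq : 2 ≤ q) (hm : 2 ≤ m) (hmn : m < n) (c : ℕ) :
    ¬ (c + digitTail q m ≡ c + digitTail q n [MOD q ^ m]) := by
  intro h
  have h1 := Nat.ModEq.add_left_cancel' c h
  have e1 : digitTail q n = digitTail q m + ∑ j ∈ Finset.Ico (m - 1) (n - 1), q ^ j := by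
    unfold digitTail
    rw [Finset.sum_Ico_consecutive _ (by omega) (by omega)]
  have e2 : ∑ j ∈ Finset.Ico (m - 1) (n - 1), q ^ j
      = q ^ (m - 1) + ∑ j ∈ Finset.Ico m (n - 1), q ^ j := by
    rw [Finset.sum_eq_sum_Ico_succ_bot (by omega), show m - 1 + 1 = m by omega]
  have d : q ^ m ∣ ∑ j ∈ Finset.Ico m (n - 1), q ^ j := by
    apply Finset.dvd_sum
    intro j hj
    exact pow_dvd_pow _ (Finset.mem_Ico.mp hj).1
  rw [e1] at h1
  have h2 : 0 ≡ ∑ j ∈ Finset.Ico (m - 1) (n - 1), q ^ j [MOD q ^ m] :=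
    Nat.ModEq.add_left_cancel' (digitTail q m) (by simpa using h1)
  have h3 := (Nat.modEq_zero_iff_dvd.mp h2.symm)
  rw [e2] at h3
  have h4 : q ^ m ∣ q ^ (m - 1) := (Nat.dvd_add_left d).mp h3
  have h5 := (Nat.pow_dvd_pow_iff_le_right (by omega)).mp h4
  omega

/-- `q` divides the tail. -/
lemma dvd_digitTail (q m : ℕ) : q ∣ digitTail q m := by
  apply Finset.dvd_sum
  intro j hj
  have := (Finset.mem_Ico.mp hj).1
  exact dvd_pow_self _ (by omega)

theorem manyFactor_good (t : ℕ) (ht : 3 ≤ t) (p : Fin t → ℕ)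
    (hp : ∀ k, (p k).Prime) (hodd : ∀ k, Odd (p k)) (hmono : StrictMono p)
    (α : Fin t → ℕ) (hα : ∀ k, 1 ≤ α k)
    (S : Finset (ZMod (∏ k, p k))) (hS : 2 ^ t ≤ S.card) :
    ∃ a : (Fin t → ℕ) → ℤ,
      IsGood {x : ℤ × ℕ | ∃ v : Fin t → ℕ, (∀ k, 1 ≤ v k ∧ v k ≤ α k) ∧
        x = (a v, ∏ k, p k ^ v k)} ∧
      ∀ v : Fin t → ℕ, (∀ k, 1 ≤ v k ∧ v k ≤ α k) →
        ((a v : ZMod (∏ k, p k)) ∈ S) := by 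
  classical
  have hinj := hmono.injective
  have hcop : ∀ i j, i ≠ j → Nat.Coprime (p i) (p j) := fun i j hij =>
    (Nat.coprime_primes (hp i) (hp j)).mpr (fun h => hij (hinj h))
  have hP : (∏ k, p k) ≠ 0 := Finset.prod_ne_zero_iff.mpr fun k _ => (hp k).ne_zero
  have : NeZero (∏ k, p k) := ⟨hP⟩
  obtain ⟨f⟩ : Nonempty (Finset (Fin t) ↪ S) := by
    apply Function.Embedding.nonempty_of_card_le
    simpa using hS
  let U : (Fin t → ℕ) → Finset (Fin t) := fun v => Finset.univ.filter fun k => 2 ≤ v k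
  let s : (Fin t → ℕ) → ℕ := fun v => (f (U v) : ZMod (∏ k, p k)).val
  have hex : ∀ v : Fin t → ℕ, ∃ a : ℕ, ∀ k, a ≡ s v + digitTail (p k) (v k) [MOD p k ^ v k] := by
    intro v
    obtain ⟨a, ha⟩ := Nat.chineseRemainderOfFinset
      (fun k => s v + digitTail (p k) (v k)) (fun k => p k ^ v k) Finset.univ
      (fun k _ => pow_ne_zero _ (hp k).ne_zero)
      (fun i _ j _ hij => Nat.Coprime.pow _ _ (hcop i j hij))
    exact ⟨a, fun k => ha k (Finset.mem_univ k)⟩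
  choose a ha using hex
  have hval : ∀ v : Fin t → ℕ, (∀ k, 1 ≤ v k) →
      ((a v : ℕ) : ZMod (∏ k, p k)) = f (U v) := by
    intro v hv
    have h1 : a v ≡ s v [MOD ∏ k, p k] := by
      rw [Nat.modEq_iff_dvd]
      push_cast
      apply Finset.prod_dvd_of_coprime
      · intro i _ j _ hij
        exact Nat.isCoprime_iff_coprime.mpr (hcop i j hij)
      · intro k _
        rw [← Nat.modEq_iff_dvd]
        have h2 := (ha v k).of_dvd (dvd_pow_self (p k) (by have := hv k; omega))
        refine h2.trans ?_
        have h3 := (Nat.modEq_zero_iff_dvd.mpr (dvd_digitTail (p k) (v k))).add_left (s v)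
        simpa using h3
    rw [(ZMod.natCast_eq_natCast_iff _ _ _).mpr h1]
    exact ZMod.natCast_zmod_val _
  have key : ∀ v w : Fin t → ℕ, (∀ k, 1 ≤ v k) → (∀ k, 1 ≤ w k) → U v = U w →
      (∃ k, v k < w k) →
      ¬ Overlap ((a v : ℤ), ∏ k, p k ^ v k) ((a w : ℤ), ∏ k, p k ^ w k) := by
    rintro v w hv hw hU ⟨k, hk⟩ ⟨x, hx1, hx2⟩
    have hk2 : 2 ≤ v k := by
      have h1 : k ∈ U w := by
        simp only [U, Finset.mem_filter, Finset.mem_univ, true_and]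
        have := hv k
        omega
      rw [← hU] at h1
      simpa [U] using h1
    have d1 : ((p k ^ v k : ℕ) : ℤ) ∣ ((∏ k, p k ^ v k : ℕ) : ℤ) :=
      Int.natCast_dvd_natCast.mpr (Finset.dvd_prod_of_mem (fun k => p k ^ v k) (Finset.mem_univ k))
    have d2 : ((p k ^ v k : ℕ) : ℤ) ∣ ((∏ k, p k ^ w k : ℕ) : ℤ) :=
      Int.natCast_dvd_natCast.mpr ((pow_dvd_pow _ hk.le).trans
        (Finset.dvd_prod_of_mem (fun k => p k ^ w k) (Finset.mem_univ k)))
    have h3 : a v ≡ a w [MOD p k ^ v k] :=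
      Int.natCast_modEq_iff.mp ((hx1.of_dvd d1).symm.trans (hx2.of_dvd d2))
    have h4 := (ha v k).symm.trans (h3.trans ((ha w k).of_dvd (pow_dvd_pow _ hk.le)))
    have hs : s w = s v := by simp only [s, hU]
    rw [hs] at h4
    exact digitTail_not_modEq _ _ _ (hp k).two_le hk2 hk _ h4
  refine ⟨fun v => (a v : ℤ), ?_, ?_⟩
  · rintro _ ⟨v, hv, rfl⟩ _ ⟨w, hw, rfl⟩ hne hov
    exfalso
    have hvw : v ≠ w := by
      rintro rfl
      exact hne rfl
    by_cases hU : U v = U w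
    · obtain ⟨k, hk⟩ := Function.ne_iff.mp hvw
      rcases lt_or_gt_of_ne hk with h | h
      · exact key v w (fun k => (hv k).1) (fun k => (hw k).1) hU ⟨k, h⟩ hov
      · obtain ⟨x, h1, h2⟩ := hov
        exact key w v (fun k => (hw k).1) (fun k => (hv k).1) hU.symm ⟨k, h⟩ ⟨x, h2, h1⟩
    · obtain ⟨x, h1, h2⟩ := hov
      have hd : ∀ v : Fin t → ℕ, (∀ k, 1 ≤ v k) →
          ((∏ k, p k : ℕ) : ℤ) ∣ ((∏ k, p k ^ v k : ℕ) : ℤ) := fun v hv =>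
        Int.natCast_dvd_natCast.mpr (Finset.prod_dvd_prod_of_dvd _ _ fun k _ =>
          dvd_pow_self _ (by have := hv k; omega))
      have h3 : a v ≡ a w [MOD ∏ k, p k] := Int.natCast_modEq_iff.mp
        ((h1.of_dvd (hd v fun k => (hv k).1)).symm.trans (h2.of_dvd (hd w fun k => (hw k).1)))
      have h4 := (ZMod.natCast_eq_natCast_iff _ _ _).mpr h3
      rw [hval v fun k => (hv k).1, hval w fun k => (hw k).1] at h4
      exact hU (f.injective (Subtype.ext h4))
  · intro v hv
    have h := hval v fun k => (hv k).1
    simp only [Int.cast_natCast]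
    rw [h]
    exact (f (U v)).2
end

section
/- Let p_1 < p_2 < ... < p_t be distinct primes and let α_1, ..., α_t ≥ 1 be integers. Then the set of congruences ∪_{1 ≤ i ≤ t} { 1 (mod p_i) } ∪ { p_i^{β-1} (mod p_i^β) : 1 ≤ i ≤ t, 2 ≤ β ≤ α_i } is good. -/
theorem prime_layer_aux (p b c : ℕ) (hp : p.Prime) (hbc : b < c) (x : ℤ)
    (h1 : x ≡ (p : ℤ) ^ b [ZMOD ((p ^ (b + 1) : ℕ) : ℤ)])
    (h2 : x ≡ (p : ℤ) ^ c [ZMOD ((p ^ (c + 1) : ℕ) : ℤ)]) : False := by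
  push_cast at h1 h2
  have d1 : (p : ℤ) ^ (b + 1) ∣ (p : ℤ) ^ c := pow_dvd_pow _ hbc
  have d2 : (p : ℤ) ^ (b + 1) ∣ (p : ℤ) ^ (c + 1) := pow_dvd_pow _ (by omega)
  have d3 := d2.trans h2.dvd
  have d4 : (p : ℤ) ^ (b + 1) ∣ x := (dvd_sub_right d1).mp d3
  have d5 : (p : ℤ) ^ (b + 1) ∣ (p : ℤ) ^ b := (dvd_sub_left d4).mp h1.dvd
  have d6 : p ^ (b + 1) ∣ p ^ b := by exact_mod_cast d5
  have := (Nat.pow_dvd_pow_iff_le_right hp.one_lt).mp d6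
  omega

theorem prime_layer_good (t : ℕ) (p : Fin t → ℕ) (hp : ∀ k, (p k).Prime)
    (hmono : StrictMono p) (α : Fin t → ℕ) (hα : ∀ k, 1 ≤ α k) :
    IsGood ({c : ℤ × ℕ | ∃ i : Fin t, c = ((1 : ℤ), p i)} ∪
      {c : ℤ × ℕ | ∃ i : Fin t, ∃ β : ℕ, 2 ≤ β ∧ β ≤ α i ∧
        c = ((p i : ℤ) ^ (β - 1), p i ^ β)}) := by
  have key : ∀ c ∈ ({c : ℤ × ℕ | ∃ i : Fin t, c = ((1 : ℤ), p i)} ∪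
      {c : ℤ × ℕ | ∃ i : Fin t, ∃ β : ℕ, 2 ≤ β ∧ β ≤ α i ∧
        c = ((p i : ℤ) ^ (β - 1), p i ^ β)}),
      ∃ i : Fin t, ∃ b : ℕ, c = ((p i : ℤ) ^ b, p i ^ (b + 1)) := by
    rintro c (⟨i, rfl⟩ | ⟨i, β, hβ, -, rfl⟩)
    · exact ⟨i, 0, by simp⟩
    · exact ⟨i, β - 1, by rw [Nat.sub_add_cancel (by omega)]⟩
  intro c₁ h₁ c₂ h₂ hne hov
  obtain ⟨i, b, rfl⟩ := key c₁ h₁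
  obtain ⟨j, c, rfl⟩ := key c₂ h₂
  obtain ⟨x, hx1, hx2⟩ := hov
  by_cases hij : i = j
  · subst hij
    exfalso
    rcases lt_trichotomy b c with h | h | h
    · exact prime_layer_aux _ b c (hp i) h x hx1 hx2
    · exact hne (by rw [h])
    · exact prime_layer_aux _ c b (hp i) h x hx2 hx1
  · exact Nat.Coprime.pow _ _
      ((Nat.coprime_primes (hp i) (hp j)).mpr (fun h => hij (hmono.injective h)))
end

section
/- Let n = p_1^{α_1} · p_2^{α_2} · ... · p_t^{α_t} where p_1 < p_2 < ... < p_t are primes, t ≥ 3, α_k ≥ 1 for all k, and t ≤ p_1 - 1. Then n is nice. -/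
theorem key_lt_s13 (q f v w : ℕ) (hq : q.Prime) (hf : 1 ≤ f) (hfq : f < q) (g : ℕ) (x : ℤ)
    (h1 : x ≡ ((f * q ^ v : ℕ) : ℤ) [ZMOD ((q ^ (v + 1) : ℕ) : ℤ)])
    (h2 : x ≡ ((g * q ^ w : ℕ) : ℤ) [ZMOD ((q ^ (w + 1) : ℕ) : ℤ)]) (hvw : v < w) : False := by
  have hd : ((q ^ (v + 1) : ℕ) : ℤ) ∣ ((q ^ (w + 1) : ℕ) : ℤ) :=
    Int.natCast_dvd_natCast.mpr (pow_dvd_pow q (by omega))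
  have h3 := h1.symm.trans (h2.of_dvd hd)
  rw [Int.natCast_modEq_iff] at h3
  have h4 : q ^ (v + 1) ∣ g * q ^ w := Dvd.dvd.mul_left (pow_dvd_pow q (by omega)) g
  have h5 : q ^ (v + 1) ∣ f * q ^ v := (h3.dvd_iff dvd_rfl).mpr h4
  rw [pow_succ, mul_comm f] at h5
  have h6 := Nat.dvd_of_mul_dvd_mul_left (pow_pos hq.pos v) h5
  exact absurd (Nat.le_of_dvd hf h6) (by omega)

theorem key_eq_s13 (q f v w g : ℕ) (hq : q.Prime) (hf : 1 ≤ f) (hfq : f < q) (hg : 1 ≤ g)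
    (hgq : g < q) (x : ℤ)
    (h1 : x ≡ ((f * q ^ v : ℕ) : ℤ) [ZMOD ((q ^ (v + 1) : ℕ) : ℤ)])
    (h2 : x ≡ ((g * q ^ w : ℕ) : ℤ) [ZMOD ((q ^ (w + 1) : ℕ) : ℤ)]) : v = w ∧ f = g := by
  rcases lt_trichotomy v w with h | h | h
  · exact (key_lt_s13 q f v w hq hf hfq g x h1 h2 h).elim
  · subst h
    refine ⟨rfl, ?_⟩
    have h3 := h1.symm.trans h2
    rw [Int.natCast_modEq_iff, pow_succ, mul_comm f, mul_comm g] at h3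
    have h4 := Nat.ModEq.mul_left_cancel' (pow_pos hq.pos v).ne' h3
    exact Nat.ModEq.eq_of_lt_of_lt h4 hfq hgq
  · exact (key_lt_s13 q g w v hq hg hgq f x h2 h1 h).elim

theorem walk (P Q : ℕ → Prop) (F G : ℕ → ℕ)
    (hF : ∀ i, P i → 1 ≤ F i ∧ P (i + F i) ∧ ∀ m, 1 ≤ m → P (i + m) → F i ≤ m)
    (hG : ∀ i, Q i → Q (i + G i))
    (hFG : ∀ i, P i → Q i → F i = G i) :
    ∀ m i, P i → Q i → P (i + m) → Q (i + m) := by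
  intro m
  induction m using Nat.strong_induction_on with
  | _ m ih =>
    intro i hP hQ hm
    rcases Nat.eq_zero_or_pos m with rfl | hpos
    · simpa using hQ
    · obtain ⟨a, b, c⟩ := hF i hP
      have hle := c m hpos hm
      have hq := hG i hQ
      rw [← hFG i hP hQ] at hq
      have e : i + F i + (m - F i) = i + m := by omega
      have := ih (m - F i) (by omega) (i + F i) b hq (by rwa [e])
      rwa [e] at this

/-- Cyclic gap from index `i` to the next index whose prime divides `d`. -/
noncomputable def gap (q : ℕ → ℕ) (d i : ℕ) : ℕ := sInf {m | 1 ≤ m ∧ q (i + m) ∣ d}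

theorem gap_spec (q : ℕ → ℕ) (t : ℕ) (ht : 1 ≤ t) (hq : ∀ i, q (i + t) = q i) (d i : ℕ)
    (h : q i ∣ d) : 1 ≤ gap q d i ∧ gap q d i ≤ t ∧ q (i + gap q d i) ∣ d ∧
      ∀ m, 1 ≤ m → q (i + m) ∣ d → gap q d i ≤ m := by
  have hm : t ∈ {m | 1 ≤ m ∧ q (i + m) ∣ d} := ⟨ht, by rw [hq]; exact h⟩
  have h1 := Nat.sInf_mem (Set.nonempty_of_mem hm)
  exact ⟨h1.1, Nat.sInf_le hm, h1.2, fun m a b => Nat.sInf_le ⟨a, b⟩⟩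

theorem case1_nice (t : ℕ) (ht : 3 ≤ t) (p : Fin t → ℕ) (hp : ∀ k, (p k).Prime)
    (hmono : StrictMono p) (α : Fin t → ℕ) (hα : ∀ k, 1 ≤ α k)
    (htp : t ≤ p ⟨0, by omega⟩ - 1) :
    IsNice (∏ k, p k ^ α k) := by
  have ht0 : 0 < t := by omega
  have hlt : ∀ k, t < p k := by
    intro k
    have h1 : p ⟨0, by omega⟩ ≤ p k := hmono.monotone (Fin.mk_le_of_le_val (Nat.zero_le _))
    omega
  obtain ⟨q, hqdef⟩ : ∃ q : ℕ → ℕ, ∀ i, q i = p ⟨i % t, Nat.mod_lt _ ht0⟩ := ⟨_, fun _ => rfl⟩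
  have hqper : ∀ i, q (i + t) = q i := by intro i; simp [hqdef]
  have hqp : ∀ i, (q i).Prime := fun i => by rw [hqdef]; exact hp _
  have hqt : ∀ i, t < q i := fun i => by rw [hqdef]; exact hlt _
  have hqk : ∀ k : Fin t, q k = p k := by
    intro k; rw [hqdef]; congr 1; ext; simp [Nat.mod_eq_of_lt k.2]
  -- residues
  have hcrt : ∀ d : ℕ, ∃ x : ℕ, ∀ i < t,
      x ≡ gap q d i * q i ^ (d.factorization (q i) - 1) [MOD q i ^ d.factorization (q i)] := by
    intro d
    obtain ⟨x, hx⟩ := Nat.chineseRemainderOfFinset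
      (fun i => gap q d i * q i ^ (d.factorization (q i) - 1))
      (fun i => q i ^ d.factorization (q i)) (Finset.range t)
      (fun i _ => pow_ne_zero _ (hqp i).ne_zero) (by
        intro i hi j hj hij
        have hi' : i < t := by simpa using hi
        have hj' : j < t := by simpa using hj
        apply Nat.Coprime.pow
        rw [Nat.coprime_primes (hqp i) (hqp j)]
        intro h
        have h2 := hmono.injective ((hqk ⟨i, hi'⟩).symm.trans (h.trans (hqk ⟨j, hj'⟩)))
        exact hij (by simpa using h2))
    exact ⟨x, fun i hi => hx i (by simpa using hi)⟩
  choose a ha using hcrt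
  refine ⟨fun d => (a d : ℤ), ?_⟩
  rintro _ ⟨d, hd, hd1, rfl⟩ _ ⟨e, he, he1, rfl⟩ hne ⟨x, hx1, hx2⟩
  simp only at hx1 hx2 ⊢
  by_contra hcop
  apply hne
  have hprimes : ∀ r : ℕ, r.Prime → r ∣ ∏ k, p k ^ α k → ∃ k : Fin t, r = p k := by
    intro r hr hrd
    obtain ⟨k, -, hk⟩ := (Prime.dvd_finset_prod_iff hr.prime _).mp hrd
    exact ⟨k, (Nat.prime_dvd_prime_iff_eq hr (hp k)).mp (hr.dvd_of_dvd_pow hk)⟩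
  have hgapmod : ∀ d i, q (i % t) = q i ∧ gap q d (i % t) = gap q d i := by
    intro d i
    refine ⟨by simp [hqdef], ?_⟩
    unfold gap
    congr 1
    ext m
    simp [hqdef]
  have hcong : ∀ (d : ℕ), 1 < d → (x ≡ a d [ZMOD (d : ℤ)]) → ∀ i, q i ∣ d →
      ∃ v, d.factorization (q i) = v + 1 ∧
      x ≡ ((gap q d i * q i ^ v : ℕ) : ℤ) [ZMOD ((q i ^ (v + 1) : ℕ) : ℤ)] := by
    intro d hd1 hx i hi
    have hpos := (hqp i).factorization_pos_of_dvd (by omega) hi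
    obtain ⟨v, hv⟩ := Nat.exists_eq_add_of_lt hpos
    rw [zero_add] at hv
    refine ⟨v, hv, ?_⟩
    have h1 := ha d (i % t) (Nat.mod_lt _ ht0)
    rw [(hgapmod d i).1, (hgapmod d i).2, hv, Nat.add_sub_cancel] at h1
    have h2 : q i ^ (v + 1) ∣ d := by rw [← hv]; exact Nat.ordProj_dvd d (q i)
    exact (hx.of_dvd (Int.natCast_dvd_natCast.mpr h2)).trans (Int.natCast_modEq_iff.mpr h1)
  have hboth : ∀ i, q i ∣ d → q i ∣ e →
      d.factorization (q i) = e.factorization (q i) ∧ gap q d i = gap q e i := by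
    intro i h1 h2
    obtain ⟨v, hv, hv'⟩ := hcong d hd1 hx1 i h1
    obtain ⟨w, hw, hw'⟩ := hcong e he1 hx2 i h2
    have g1 := gap_spec q t ht0 hqper d i h1
    have g2 := gap_spec q t ht0 hqper e i h2
    have := hqt i
    have := key_eq_s13 (q i) _ v w _ (hqp i) g1.1 (by omega) g2.1 (by omega) x hv' hw'
    exact ⟨by omega, this.2⟩
  obtain ⟨r, hr, hrd, hre⟩ := Nat.Prime.not_coprime_iff_dvd.mp hcop
  obtain ⟨k, rfl⟩ := hprimes r hr (hrd.trans hd)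
  rw [← hqk] at hrd hre
  have hreach : ∀ j : Fin t, ∃ m, q (k + m) = q j := by
    intro j
    refine ⟨j + t - k, ?_⟩
    have : (k : ℕ) + (j + t - k) = j + t := by omega
    rw [this, hqper]
  have hsub1 : ∀ j : Fin t, q j ∣ d → q j ∣ e := by
    intro j hj
    obtain ⟨m, hm⟩ := hreach j
    rw [← hm] at hj ⊢
    refine walk (fun i => q i ∣ d) (fun i => q i ∣ e) (gap q d) (gap q e) ?_ ?_ ?_ m k hrd hre hj
    · intro i hi
      have g := gap_spec q t ht0 hqper d i hi
      exact ⟨g.1, g.2.2⟩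
    · intro i hi
      exact (gap_spec q t ht0 hqper e i hi).2.2.1
    · intro i h1 h2
      exact (hboth i h1 h2).2
  have hsub2 : ∀ j : Fin t, q j ∣ e → q j ∣ d := by
    intro j hj
    obtain ⟨m, hm⟩ := hreach j
    rw [← hm] at hj ⊢
    refine walk (fun i => q i ∣ e) (fun i => q i ∣ d) (gap q e) (gap q d) ?_ ?_ ?_ m k hre hrd hj
    · intro i hi
      have g := gap_spec q t ht0 hqper e i hi
      exact ⟨g.1, g.2.2⟩
    · intro i hi
      exact (gap_spec q t ht0 hqper d i hi).2.2.1
    · intro i h1 h2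
      exact (hboth i h2 h1).2.symm
  have hde : d = e := by
    apply Nat.eq_of_factorization_eq (by omega) (by omega)
    intro r
    by_cases hr : r.Prime
    · by_cases h : r ∣ d ∨ r ∣ e
      · obtain ⟨j, rfl⟩ := hprimes r hr (h.elim (fun h => h.trans hd) (fun h => h.trans he))
        rw [← hqk] at h ⊢
        rcases h with h | h
        · exact (hboth j h (hsub1 j h)).1
        · exact (hboth j (hsub2 j h) h).1
      · push Not at h
        rw [Nat.factorization_eq_zero_of_not_dvd h.1, Nat.factorization_eq_zero_of_not_dvd h.2]
    · rw [Nat.factorization_eq_zero_of_not_prime _ hr, Nat.factorization_eq_zero_of_not_prime _ hr]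
  rw [hde]
end

section
/- Let n = p_1 · p_2^{α_2} · ... · p_t^{α_t} where p_1 < p_2 < ... < p_t are primes, t ≥ 3, α_k ≥ 1 for all 2 ≤ k ≤ t, and t ≤ p_1. Then n is nice. -/
/-- If two cyclic permutations of `S`, `T` agree on `S ∩ T`, which is nonempty, then `S ⊆ T`. -/
lemma cyc_subset {ι : Type*} (S T : Finset ι) (f g : Equiv.Perm ι)
    (hf : f.IsCycleOn (S : Set ι)) (hg : g.IsCycleOn (T : Set ι))
    (k : ι) (hkS : k ∈ S) (hkT : k ∈ T) (h : ∀ i, i ∈ S → i ∈ T → f i = g i) : S ⊆ T := by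
  intro y hy
  obtain ⟨m, -, rfl⟩ := hf.exists_pow_eq hkS hy
  have key : ∀ m : ℕ, (f ^ m) k ∈ S ∧ (f ^ m) k ∈ T := by
    intro m
    induction m with
    | zero => simpa using ⟨hkS, hkT⟩
    | succ m ih =>
      rw [pow_succ', Equiv.Perm.mul_apply]
      refine ⟨hf.1.mapsTo ih.1, ?_⟩
      rw [h _ ih.1 ih.2]
      exact hg.1.mapsTo ih.2
  exact (key m).2

/-- Residues `u * q^(e-1)` mod `q^e` with `u` not divisible by `q` separate different exponents. -/
lemma exp_sep (q e e' u u' : ℕ) (x : ℤ) (hq : q.Prime) (he : 1 ≤ e) (hlt : e < e')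
    (hu : 0 < u) (huq : u < q)
    (h : x ≡ ((u * q ^ (e - 1) : ℕ) : ℤ) [ZMOD ((q ^ e : ℕ) : ℤ)])
    (h' : x ≡ ((u' * q ^ (e' - 1) : ℕ) : ℤ) [ZMOD ((q ^ e' : ℕ) : ℤ)]) : False := by
  have h1 : x ≡ ((u' * q ^ (e' - 1) : ℕ) : ℤ) [ZMOD ((q ^ e : ℕ) : ℤ)] :=
    h'.of_dvd (by exact_mod_cast pow_dvd_pow q hlt.le)
  have h2 := h.symm.trans h1
  rw [Int.natCast_modEq_iff] at h2
  have h3 : q ^ e ∣ u' * q ^ (e' - 1) := Dvd.dvd.mul_left (pow_dvd_pow q (by omega)) _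
  have h4 : q ^ e ∣ u * q ^ (e - 1) := (h2.dvd_iff dvd_rfl).2 h3
  obtain ⟨m, rfl⟩ : ∃ m, e = m + 1 := ⟨e - 1, by omega⟩
  rw [pow_succ', Nat.add_sub_cancel] at h4
  have h5 : q ∣ u := Nat.dvd_of_mul_dvd_mul_right (pow_pos hq.pos m) h4
  exact absurd (Nat.le_of_dvd hu h5) (by omega)

lemma dig_eq (q e u u' : ℕ) (x : ℤ) (hq : q.Prime) (he : 1 ≤ e)
    (h : x ≡ ((u * q ^ (e - 1) : ℕ) : ℤ) [ZMOD ((q ^ e : ℕ) : ℤ)])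
    (h' : x ≡ ((u' * q ^ (e - 1) : ℕ) : ℤ) [ZMOD ((q ^ e : ℕ) : ℤ)]) : u ≡ u' [MOD q] := by
  have h2 := h.symm.trans h'
  rw [Int.natCast_modEq_iff] at h2
  obtain ⟨m, rfl⟩ : ∃ m, e = m + 1 := ⟨e - 1, by omega⟩
  rw [pow_succ', Nat.add_sub_cancel] at h2
  exact Nat.ModEq.mul_right_cancel' (pow_pos hq.pos m).ne' h2

theorem case2_nice (t : ℕ) (ht : 3 ≤ t) (p : Fin t → ℕ) (hp : ∀ k, (p k).Prime)
    (hmono : StrictMono p) (α : Fin t → ℕ) (hα₀ : α ⟨0, by omega⟩ = 1)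
    (hα : ∀ k, 1 ≤ α k) (htp : t ≤ p ⟨0, by omega⟩) :
    IsNice (∏ k, p k ^ α k) := by
  classical
  set z : Fin t := ⟨0, by omega⟩ with hz
  set n := ∏ k, p k ^ α k with hn
  have hn0 : n ≠ 0 := Finset.prod_ne_zero_iff.2 fun k _ => pow_ne_zero _ (hp k).ne_zero
  have hz1 : n.factorization (p z) = 1 := by
    rw [hn, Nat.factorization_prod (fun k _ => pow_ne_zero _ (hp k).ne_zero),
      Finset.sum_apply', Finset.sum_eq_single z]
    · simp [(hp z).factorization, hα₀]
    · intro b _ hb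
      simp [(hp b).factorization, hmono.injective.ne hb]
    · simp
  have hprime : ∀ q, q.Prime → q ∣ n → ∃ k, q = p k := by
    intro q hq hqn
    obtain ⟨k, -, hk⟩ := (hq.prime.dvd_finsetProd_iff _).1 hqn
    exact ⟨k, (Nat.prime_dvd_prime_iff_eq hq (hp k)).1 (hq.dvd_of_dvd_pow hk)⟩
  have hbig : ∀ k, k ≠ z → t < p k := by
    intro k hk
    have : z < k := by
      rw [Fin.lt_def]
      have : k.val ≠ 0 := fun h => hk (Fin.ext h)
      show 0 < k.val
      omega
    exact lt_of_le_of_lt htp (hmono this)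
  have hge : ∀ k, t ≤ p k := by
    intro k
    by_cases h : k = z
    · rw [h]; exact htp
    · exact (hbig k h).le
  choose F hF _ using fun S : Finset (Fin t) => S.exists_cycleOn
  let supp : ℕ → Finset (Fin t) := fun d => Finset.univ.filter fun k => p k ∣ d
  let u : ℕ → Fin t → ℕ := fun d k => (F (supp d) k).val + if k = z then 0 else 1
  have hcrt : ∀ d : ℕ, ∃ a : ℕ, ∀ k, a ≡ u d k * p k ^ (d.factorization (p k) - 1)
      [MOD p k ^ d.factorization (p k)] := by
    intro d
    have := Nat.chineseRemainderOfFinset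
      (fun k => u d k * p k ^ (d.factorization (p k) - 1))
      (fun k => p k ^ d.factorization (p k)) Finset.univ
      (fun k _ => pow_ne_zero _ (hp k).ne_zero)
      (fun i _ j _ hij => Nat.Coprime.pow _ _
        ((Nat.coprime_primes (hp i) (hp j)).2 (hmono.injective.ne hij)))
    exact ⟨this.1, fun k => this.2 k (Finset.mem_univ k)⟩
  choose a ha using hcrt
  refine ⟨fun d => (a d : ℤ), ?_⟩
  rintro _ ⟨d, hd, hd1, rfl⟩ _ ⟨d', hd', hd1', rfl⟩ hne ⟨x, hx, hx'⟩
  by_contra hco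
  apply hne
  suffices d = d' by rw [this]
  simp only at hx hx' hco
  have hd0 : d ≠ 0 := by omega
  have hd0' : d' ≠ 0 := by omega
  have hloc : ∀ d : ℕ, x ≡ (a d : ℤ) [ZMOD (d : ℤ)] → ∀ k,
      x ≡ ((u d k * p k ^ (d.factorization (p k) - 1) : ℕ) : ℤ)
        [ZMOD ((p k ^ d.factorization (p k) : ℕ) : ℤ)] := by
    intro d hx k
    exact (hx.of_dvd (by exact_mod_cast Nat.ordProj_dvd d (p k))).trans
      ((Int.natCast_modEq_iff).2 (ha d k))
  have hpos : ∀ d : ℕ, d ≠ 0 → ∀ k, p k ∣ d → 1 ≤ d.factorization (p k) := fun d h0 k h =>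
    (hp k).factorization_pos_of_dvd h0 h
  have hle : ∀ d : ℕ, d ∣ n → d.factorization (p z) ≤ 1 := fun d h =>
    hz1 ▸ (Nat.factorization_le_iff_dvd (ne_zero_of_dvd_ne_zero hn0 h) hn0).2 h (p z)
  have hu : ∀ d k, k ≠ z → 0 < u d k ∧ u d k < p k := by
    intro d k hk
    have := hbig k hk
    have h2 := (F (supp d) k).isLt
    simp only [u, if_neg hk]
    omega
  have hexp : ∀ k, p k ∣ d → p k ∣ d' → d.factorization (p k) = d'.factorization (p k) := by
    intro k hk hk'
    have h1 := hpos d hd0 k hk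
    have h1' := hpos d' hd0' k hk'
    by_cases hkz : k = z
    · subst hkz
      have := hle d hd
      have := hle d' hd'
      omega
    · rcases lt_trichotomy (d.factorization (p k)) (d'.factorization (p k)) with h | h | h
      · exact (exp_sep _ _ _ _ _ x (hp k) h1 h (hu d k hkz).1 (hu d k hkz).2
          (hloc d hx k) (hloc d' hx' k)).elim
      · exact h
      · exact (exp_sep _ _ _ _ _ x (hp k) h1' h (hu d' k hkz).1 (hu d' k hkz).2
          (hloc d' hx' k) (hloc d hx k)).elim
  have hdig : ∀ k, k ∈ supp d → k ∈ supp d' → F (supp d) k = F (supp d') k := by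
    intro k hk hk'
    have hk : p k ∣ d := by simpa [supp] using hk
    have hk' : p k ∣ d' := by simpa [supp] using hk'
    have e := hexp k hk hk'
    have h2 := hloc d' hx' k
    rw [← e] at h2
    have h3 := dig_eq _ _ _ _ x (hp k) (hpos d hd0 k hk) (hloc d hx k) h2
    have h4 := Nat.ModEq.add_right_cancel' _ h3
    have b1 := (F (supp d) k).isLt
    have b2 := (F (supp d') k).isLt
    have b3 := hge k
    exact Fin.ext (Nat.ModEq.eq_of_lt_of_lt h4 (by omega) (by omega))
  obtain ⟨q, hq, hqd, hqd'⟩ := Nat.Prime.not_coprime_iff_dvd.1 hco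
  obtain ⟨k, rfl⟩ := hprime q hq (hqd.trans hd)
  have hkS : k ∈ supp d := by simpa [supp] using hqd
  have hkT : k ∈ supp d' := by simpa [supp] using hqd'
  have hS : supp d = supp d' := Finset.Subset.antisymm
    (cyc_subset _ _ _ _ (hF _) (hF _) k hkS hkT hdig)
    (cyc_subset _ _ _ _ (hF _) (hF _) k hkT hkS fun i h h' => (hdig i h' h).symm)
  have hiff : ∀ k, p k ∣ d ↔ p k ∣ d' := by
    intro k
    have : k ∈ supp d ↔ k ∈ supp d' := by rw [hS]
    simpa [supp] using this
  apply Nat.eq_of_factorization_eq hd0 hd0'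
  intro q
  by_cases hq : q.Prime
  · by_cases h : q ∣ d
    · obtain ⟨k, rfl⟩ := hprime q hq (h.trans hd)
      exact hexp k h ((hiff k).1 h)
    · by_cases h' : q ∣ d'
      · obtain ⟨k, rfl⟩ := hprime q hq (h'.trans hd')
        exact absurd ((hiff k).2 h') h
      · rw [Nat.factorization_eq_zero_of_not_dvd h, Nat.factorization_eq_zero_of_not_dvd h']
  · rw [Nat.factorization_eq_zero_of_not_prime _ hq, Nat.factorization_eq_zero_of_not_prime _ hq]
end

section
/- The integer n = 3 · 5^2 · 7^2 = 3675 is nice. -/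
/-- The chosen residues. -/
def resList : List (ℕ × ℤ) :=
  [(3, 0), (5, 0), (7, 0), (15, 7), (21, 2), (25, 1), (35, 3), (49, 1), (75, 31), (105, 58), (147, 8), (175, 136), (245, 113), (525, 436), (735, 253), (1225, 211), (3675, 2311)]

/-- The residue attached to the divisor `d`. -/
def resOf (d : ℕ) : ℤ := (resList.lookup d).getD 0

theorem resOf_key : ∀ d ∈ resList.map Prod.fst, ∀ e ∈ resList.map Prod.fst,
    d ≠ e → Nat.gcd d e = 1 ∨ (resOf d - resOf e) % (Nat.gcd d e : ℤ) ≠ 0 := by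
  decide +kernel

theorem small_divisors : ∀ k < 61, k ∣ 3675 →
    (1 < k → k ∈ resList.map Prod.fst) ∧ 3675 / k ∈ resList.map Prod.fst := by
  decide +kernel

theorem divisors_3675 (d : ℕ) (hd : d ∣ 3675) (hd1 : 1 < d) :
    d ∈ resList.map Prod.fst := by
  by_cases h : d < 61
  · exact (small_divisors d h hd).1 hd1
  · obtain ⟨k, hk⟩ := hd
    have hk61 : k < 61 := by
      by_contra hc
      nlinarith
    have hk0 : 0 < k := by
      rcases Nat.eq_zero_or_pos k with h0 | h0
      · subst h0
        omega
      · exact h0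
    have h2 := (small_divisors k hk61 ⟨d, by rw [hk, mul_comm]⟩).2
    rwa [hk, Nat.mul_div_cancel _ hk0] at h2

theorem nice_3675 : IsNice 3675 := by
  refine ⟨resOf, ?_⟩
  rintro _ ⟨d, hd, hd1, rfl⟩ _ ⟨e, he, he1, rfl⟩ hne ⟨x, hx1, hx2⟩
  have hdm := divisors_3675 d hd hd1
  have hem := divisors_3675 e he he1
  have hde : d ≠ e := by
    rintro rfl
    exact hne rfl
  rcases resOf_key d hdm e hem hde with h | h
  · exact h
  · exfalso
    apply h
    have h1 : (Nat.gcd d e : ℤ) ∣ resOf d - x :=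
      (Int.natCast_dvd_natCast.mpr (Nat.gcd_dvd_left d e)).trans hx1.dvd
    have h2 : (Nat.gcd d e : ℤ) ∣ resOf e - x :=
      (Int.natCast_dvd_natCast.mpr (Nat.gcd_dvd_right d e)).trans hx2.dvd
    apply Int.emod_eq_zero_of_dvd
    have h3 := dvd_sub h1 h2
    simpa using h3
end

section
/- The integer n = 5^2 · 7^2 · 11^2 · 13^2 = 25050025 is nice. -/
/-- The table of pairs `(d, a_d)` for the divisors `d > 1` of `25050025`. -/
def niceTable : List (ℕ × ℕ) :=
  [(13, 0), (169, 1), (11, 0), (143, 2), (1859, 1366),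
   (121, 1), (1573, 496), (20449, 859), (7, 0), (91, 16),
   (1183, 534), (77, 3), (1001, 849), (13013, 3082), (847, 507),
   (11011, 4489), (143143, 52768), (49, 1), (637, 302), (8281, 6280),
   (539, 113), (7007, 1135), (91091, 25390), (5929, 4621), (77077, 43814),
   (1002001, 257258), (5, 0), (65, 57), (845, 222), (55, 48),
   (715, 552), (9295, 6657), (605, 518), (7865, 617), (102245, 2432),
   (35, 4), (455, 72), (5915, 1262), (385, 38), (5005, 1542),
   (65065, 38117), (4235, 3433), (55055, 50227), (715715, 647362), (245, 169),
   (3185, 2997), (41405, 16472), (2695, 2073), (35035, 10837), (455455, 242607),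
   (29645, 14323), (385385, 144607), (5010005, 1567567), (25, 1), (325, 31),
   (4225, 2081), (275, 136), (3575, 981), (46475, 27106), (3025, 1486),
   (39325, 28931), (511225, 22881), (175, 116), (2275, 2256), (29575, 22556),
   (1925, 1886), (25025, 15556), (325325, 77156), (21175, 2586), (275275, 204381),
   (3578575, 1792506), (1225, 316), (15925, 7456), (207025, 132406), (13475, 11236),
   (175175, 129956), (2277275, 1517881), (148225, 144761), (1926925, 1069531), (25050025, 15595581)]

/-- Residue attached to `d`. -/
def niceRes (d : ℕ) : ℕ := ((niceTable.find? (fun p => p.1 == d)).map Prod.snd).getD 0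

theorem niceTable_pairs : niceTable.all (fun p => niceTable.all (fun q =>
    p.1 == q.1 || Nat.gcd p.1 q.1 == 1 ||
      !(p.2 % Nat.gcd p.1 q.1 == q.2 % Nat.gcd p.1 q.1))) = true := by
  decide +kernel

theorem niceTable_complete : (List.range 3).all (fun i => (List.range 3).all (fun j =>
    (List.range 3).all (fun k => (List.range 3).all (fun l =>
      5 ^ i * 7 ^ j * 11 ^ k * 13 ^ l == 1 ||
      niceTable.contains (5 ^ i * 7 ^ j * 11 ^ k * 13 ^ l,
        niceRes (5 ^ i * 7 ^ j * 11 ^ k * 13 ^ l)))))) = true := by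
  decide +kernel

theorem niceTable_mem (d : ℕ) (hd : d ∣ 25050025) (h1 : 1 < d) :
    (d, niceRes d) ∈ niceTable := by
  rw [show (25050025 : ℕ) = 5 ^ 2 * 7 ^ 2 * 11 ^ 2 * 13 ^ 2 by norm_num] at hd
  obtain ⟨x, w, hx, hw, rfl⟩ := (Nat.dvd_mul).1 hd
  obtain ⟨y, z, hy, hz, rfl⟩ := (Nat.dvd_mul).1 hx
  obtain ⟨u, v, hu, hv, rfl⟩ := (Nat.dvd_mul).1 hy
  obtain ⟨i, hi, rfl⟩ := (Nat.dvd_prime_pow (by norm_num)).1 hu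
  obtain ⟨j, hj, rfl⟩ := (Nat.dvd_prime_pow (by norm_num)).1 hv
  obtain ⟨k, hk, rfl⟩ := (Nat.dvd_prime_pow (by norm_num)).1 hz
  obtain ⟨l, hl, rfl⟩ := (Nat.dvd_prime_pow (by norm_num)).1 hw
  have h := niceTable_complete
  rw [List.all_eq_true] at h
  have h := h i (List.mem_range.2 (by omega))
  rw [List.all_eq_true] at h
  have h := h j (List.mem_range.2 (by omega))
  rw [List.all_eq_true] at h
  have h := h k (List.mem_range.2 (by omega))
  rw [List.all_eq_true] at h
  have h := h l (List.mem_range.2 (by omega))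
  rw [Bool.or_eq_true, beq_iff_eq] at h
  rcases h with h | h
  · omega
  · exact List.contains_iff_mem.1 h

theorem nice_25050025 : IsNice 25050025 := by
  refine ⟨fun d => (niceRes d : ℤ), ?_⟩
  rintro _ ⟨d, hd, hd1, rfl⟩ _ ⟨e, he, he1, rfl⟩ hne ⟨x, hx1, hx2⟩
  have h := niceTable_pairs
  rw [List.all_eq_true] at h
  have h := h _ (niceTable_mem d hd hd1)
  rw [List.all_eq_true] at h
  have h := h _ (niceTable_mem e he he1)
  simp only [Bool.or_eq_true, beq_iff_eq, Bool.not_eq_true', beq_eq_false_iff_ne] at h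
  rcases h with (h | h) | h
  · subst h
    exact absurd rfl hne
  · exact h
  · exfalso
    apply h
    have g1 : x ≡ niceRes d [ZMOD (Nat.gcd d e : ℤ)] :=
      hx1.of_dvd (Int.natCast_dvd_natCast.2 (Nat.gcd_dvd_left d e))
    have g2 : x ≡ niceRes e [ZMOD (Nat.gcd d e : ℤ)] :=
      hx2.of_dvd (Int.natCast_dvd_natCast.2 (Nat.gcd_dvd_right d e))
    exact Int.natCast_modEq_iff.1 (g1.symm.trans g2)
end

section
/- The integer n = 3^2 · 5^2 · 7^2 = 11025 is not nice. -/
theorem not_nice_11025 : ¬ IsNice 11025 := by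
  rintro ⟨a, h⟩
  -- the residues of 3, 9, 15, 21 would be pairwise distinct mod 3
  have key : ∀ d e : ℕ, d ∣ 11025 → e ∣ 11025 → 1 < d → 1 < e → d ≠ e →
      Nat.gcd d e = 3 → ¬ a d ≡ a e [ZMOD 3] := by
    intro d e hd he hd1 he1 hne hg hc
    have hov : Overlap (a d, d) (a e, e) := by
      have h3 : ((Int.gcd (d : ℤ) (e : ℤ) : ℕ) : ℤ) ∣ a e - a d := by
        rw [Int.gcd_natCast_natCast, hg]
        exact hc.dvd
      obtain ⟨k, hk⟩ := h3
      rw [Int.gcd_eq_gcd_ab] at hk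
      refine ⟨a d + d * (Int.gcdA d e * k), ?_, ?_⟩
      · exact (Int.modEq_iff_dvd.2 ⟨-(Int.gcdA d e * k), by ring⟩)
      · exact (Int.modEq_iff_dvd.2 ⟨Int.gcdB d e * k, by linear_combination hk⟩)
    have hcop := h (a d, d) ⟨d, hd, hd1, rfl⟩ (a e, e) ⟨e, he, he1, rfl⟩
      (fun hh => hne (congrArg Prod.snd hh)) hov
    have : Nat.gcd d e = 1 := hcop
    omega
  have h1 := key 3 9 (by norm_num) (by norm_num) (by norm_num) (by norm_num) (by norm_num) (by norm_num)
  have h2 := key 3 15 (by norm_num) (by norm_num) (by norm_num) (by norm_num) (by norm_num) (by norm_num)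
  have h3 := key 3 21 (by norm_num) (by norm_num) (by norm_num) (by norm_num) (by norm_num) (by norm_num)
  have h4 := key 9 15 (by norm_num) (by norm_num) (by norm_num) (by norm_num) (by norm_num) (by norm_num)
  have h5 := key 9 21 (by norm_num) (by norm_num) (by norm_num) (by norm_num) (by norm_num) (by norm_num)
  have h6 := key 15 21 (by norm_num) (by norm_num) (by norm_num) (by norm_num) (by norm_num) (by norm_num)
  unfold Int.ModEq at h1 h2 h3 h4 h5 h6
  omega
end
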